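/- Let R be a symmetric quantum nilpotent algebra of dimension N with function η (from the prime element theorem) and its predecessor and successor functions p and s, and let λ*_k denote the h*_k-eigenvalue of x_k. Then λ*_k = λ*_l for all 1 ≤ k, l ≤ N such that η(k) = η(l), s(k) ≠ +∞ and s(l) ≠ +∞; moreover λ*_k = λ_l^{−1} for all 1 ≤ k, l ≤ N such that η(k) = η(l), s(k) ≠ +∞ and p(l) ≠ −∞ (where λ_l is the h_l-eigenvalue of x_l). -/

import Mathlib

open scoped BigOperators

noncomputable section

universe u v

/-- The group of `K`-points of a split torus of rank `r`. -/
abbrev Torus (K : Type u) [Field K] (r : ℕ) : Type u := Fin r → Kˣ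

section Core

variable (K : Type u) [Field K] {R : Type v} [Ring R] [Algebra K R] {r N : ℕ}

/-- `a` is an eigenvector of the torus action `act` with (integral) character `f`. -/
def IsEigenWith (act : Torus K r →* (R ≃ₐ[K] R)) (f : Fin r → ℤ) (a : R) : Prop :=
  ∀ ξ : Torus K r, act ξ a = ((∏ i, ξ i ^ f i : Kˣ) : K) • a

/-- The torus action `act` is rational: every element is a finite sum of
eigenvectors whose eigenvalues are given by integral characters of the torus. -/
def IsRationalAction (act : Torus K r →* (R ≃ₐ[K] R)) : Prop :=
  ∀ a : R, ∃ (s : Finset (Fin r → ℤ)) (c : (Fin r → ℤ) → R),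
    a = ∑ f ∈ s, c f ∧ ∀ f ∈ s, IsEigenWith K act f (c f)

/-- The ordered monomial `x 0 ^ m 0 * x 1 ^ m 1 * ⋯ * x (N-1) ^ m (N-1)`. -/
def ordMonomial (x : Fin N → R) (m : Fin N → ℕ) : R :=
  ((List.finRange N).map fun k => x k ^ m k).prod

/-- The ordered monomial in the reversed order of the generators. -/
def revOrdMonomial (x : Fin N → R) (m : Fin N → ℕ) : R :=
  ((List.finRange N).reverse.map fun k => x k ^ m k).prod

/-- The subalgebra generated by the first `m` of the elements `x 0, …, x (N-1)`. -/
def Rsub (x : Fin N → R) (m : ℕ) : Subalgebra K R :=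
  Algebra.adjoin K (x '' {l : Fin N | (l : ℕ) < m})

/-- The subalgebra generated by the elements `x l` with `m < l` (for the reversed order). -/
def RsubRev (x : Fin N → R) (m : ℕ) : Subalgebra K R :=
  Algebra.adjoin K (x '' {l : Fin N | m < (l : ℕ)})

/-- The skew derivation `δ_k : a ↦ x_k a − (h_k · a) x_k` attached to the `k`-th generator. -/
def skewDelta (act : Torus K r →* (R ≃ₐ[K] R)) (x : Fin N → R) (h : Fin N → Torus K r)
    (k : Fin N) : R → R :=
  fun a => x k * a - act (h k) a * x k

end Core

/-- A quantum nilpotent algebra (CGL extension) of dimension `N`:  an iterated skew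
polynomial extension `R = K[x_1][x_2; σ_2, δ_2]⋯[x_N; σ_N, δ_N]` equipped with a rational
action of a torus `H = (Kˣ)^r` by `K`-algebra automorphisms such that the `x_k` are
`H`-eigenvectors, each `δ_k` is a locally nilpotent `σ_k`-derivation of the subalgebra
generated by `x_1, …, x_{k-1}`, and each `σ_k` is given by the action of a torus element
`h_k` whose eigenvalue `λ_k` on `x_k` is not a root of unity.  The iterated skew polynomial
presentation is encoded by the generation, linear independence of ordered monomials
(PBW basis) and the skew commutation conditions. -/
structure QNA (K : Type u) [Field K] (R : Type v) [Ring R] [Algebra K R] (N r : ℕ) where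
  x : Fin N → R
  act : Torus K r →* (R ≃ₐ[K] R)
  h : Fin N → Torus K r
  lam : Fin N → K
  rational : IsRationalAction K act
  gen : Algebra.adjoin K (Set.range x) = ⊤
  pbw : LinearIndependent K (ordMonomial (R := R) x)
  eigenvec : ∀ k : Fin N, ∃ f : Fin r → ℤ, IsEigenWith K act f (x k)
  stable : ∀ k : Fin N, ∀ a ∈ Rsub K x (k : ℕ), skewDelta K act x h k a ∈ Rsub K x (k : ℕ)
  locnil : ∀ k : Fin N, ∀ a ∈ Rsub K x (k : ℕ), ∃ n : ℕ, (skewDelta K act x h k)^[n] a = 0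
  hx : ∀ k, act (h k) (x k) = lam k • x k
  lam_not_root : ∀ k, ∀ n : ℕ, n ≠ 0 → lam k ^ n ≠ 1

/-- A symmetric quantum nilpotent algebra: a quantum nilpotent algebra which admits an
iterated skew polynomial presentation, satisfying the same axioms, also for the reversed
order `x_N, x_{N-1}, …, x_1` of the generators, with respect to torus elements `h*_k`. -/
structure SymQNA (K : Type u) [Field K] (R : Type v) [Ring R] [Algebra K R] (N r : ℕ)
    extends QNA K R N r where
  hstar : Fin N → Torus K r
  lamstar : Fin N → K
  pbwRev : LinearIndependent K (revOrdMonomial (R := R) x)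
  stableRev : ∀ k : Fin N, ∀ a ∈ RsubRev K x (k : ℕ),
    skewDelta K act x hstar k a ∈ RsubRev K x (k : ℕ)
  locnilRev : ∀ k : Fin N, ∀ a ∈ RsubRev K x (k : ℕ),
    ∃ n : ℕ, (skewDelta K act x hstar k)^[n] a = 0
  hxstar : ∀ k, act (hstar k) (x k) = lamstar k • x k
  lamstar_not_root : ∀ k, ∀ n : ℕ, n ≠ 0 → lamstar k ^ n ≠ 1

section Prime

variable (K : Type u) [Field K] {R : Type v} [Ring R] [Algebra K R] {r N : ℕ}

/-- The skew derivation `δ_k` of the `k`-th step of the presentation vanishes. -/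
def deltaZero (Q : QNA K R N r) (k : Fin N) : Prop :=
  ∀ a ∈ Rsub K Q.x (k : ℕ), skewDelta K Q.act Q.x Q.h k a = 0

/-- `p` is a prime element of the subalgebra `A`:  `p` is a nonzero noninvertible normal
element of `A` (`pA = Ap`) such that `A/Ap` is a domain. -/
def IsPrimeIn (A : Subalgebra K R) (p : R) : Prop :=
  p ∈ A ∧ p ≠ 0 ∧ (¬ ∃ u ∈ A, p * u = 1 ∧ u * p = 1) ∧
  (∀ a ∈ A, ∃ b ∈ A, a * p = p * b) ∧
  (∀ a ∈ A, ∃ b ∈ A, p * a = b * p) ∧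
  (∀ a ∈ A, ∀ b ∈ A, (∃ d ∈ A, a * b = p * d) → (∃ d ∈ A, a = p * d) ∨ (∃ d ∈ A, b = p * d))

/-- The predecessor function of the level sets of `η`:  `p(k)` is the largest `l < k`
with `η l = η k`, and `⊥` (i.e. `−∞`) if there is no such `l`. -/
def predIdx {α : Type*} [DecidableEq α] (η : Fin N → α) (k : Fin N) : WithBot (Fin N) :=
  (Finset.univ.filter fun l => l < k ∧ η l = η k).max

/-- The successor function of the level sets of `η`:  `s(k)` is the smallest `l > k`
with `η l = η k`, and `⊤` (i.e. `+∞`) if there is no such `l`. -/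
def succIdx {α : Type*} [DecidableEq α] (η : Fin N → α) (k : Fin N) : WithTop (Fin N) :=
  (Finset.univ.filter fun l => k < l ∧ η l = η k).min

/-- `(η, c, y)` is a sequence of homogeneous prime elements for the quantum nilpotent
algebra `Q` in the sense of the prime element theorem:  `y` is defined by the recursion
`y_k = y_{p(k)} x_k − c_k` (if `δ_k ≠ 0`; `y_k = x_k` if `δ_k = 0`), the `y_k` are
`H`-eigenvectors, and for every `k` the homogeneous prime elements of the subalgebra
`R_k` generated by `x_1, …, x_k` are precisely the nonzero scalar multiples of the
`y_l` with `l ≤ k` and `s(l) > k`. -/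
structure IsPrimeSeq (Q : QNA K R N r) (η : Fin N → ℤ) (c : Fin N → R) (y : Fin N → R) :
    Prop where
  c_mem : ∀ k : Fin N, ¬ deltaZero K Q k → c k ∈ Rsub K Q.x (k : ℕ)
  rec_delta_zero : ∀ k : Fin N, deltaZero K Q k → y k = Q.x k
  rec_delta_ne : ∀ k : Fin N, ¬ deltaZero K Q k →
    y k = (WithBot.recBotCoe (1 : R) (fun l => y l) (predIdx η k)) * Q.x k - c k
  homog : ∀ k : Fin N, ∃ f : Fin r → ℤ, IsEigenWith K Q.act f (y k)
  prime_iff : ∀ k : Fin N, ∀ u : R,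
    (IsPrimeIn K (Rsub K Q.x ((k : ℕ) + 1)) u ∧ ∃ f : Fin r → ℤ, IsEigenWith K Q.act f u) ↔
    (∃ l : Fin N, l ≤ k ∧ (∀ l' : Fin N, l < l' → l' ≤ k → η l' ≠ η l) ∧
      ∃ t : Kˣ, u = (t : K) • y l)

/-- The vector `ē_k = e_k + e_{p(k)} + e_{p²(k)} + ⋯ ∈ ℤ^N`. -/
def ebar (η : Fin N → ℤ) (k : Fin N) : Fin N → ℤ :=
  fun l => if l ≤ k ∧ η l = η k then 1 else 0

/-- The multiplicatively skewsymmetric matrix of eigenvalues:  `1` on the diagonal,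
`λ_{kl}` below it and `λ_{lk}⁻¹` above it. -/
def omegaEntry (lam2 : Fin N → Fin N → Kˣ) (k l : Fin N) : Kˣ :=
  if k = l then 1 else if l < k then lam2 k l else (lam2 l k)⁻¹

/-- The unique group bicharacter `Ω : ℤ^N × ℤ^N → Kˣ` with `Ω(e_k, e_l)` equal to `1`,
`λ_{kl}`, `λ_{lk}⁻¹` according as `k = l`, `k > l`, `k < l`. -/
def Omega (lam2 : Fin N → Fin N → Kˣ) (f g : Fin N → ℤ) : Kˣ :=
  ∏ k, ∏ l, (omegaEntry K lam2 k l) ^ (f k * g l)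

/-- The set of exchangeable indices: those `k` with `s(k) ≠ +∞`. -/
def exSet (η : Fin N → ℤ) : Finset (Fin N) :=
  Finset.univ.filter fun k => ∃ l, k < l ∧ η l = η k

/-- Condition (A): `K` contains square roots of the scalars `λ_{kl}` such that the
subgroup of `Kˣ` generated by all of them contains no elements of order 2. -/
def CondA (lam2 : Fin N → Fin N → Kˣ) : Prop :=
  ∃ sq : Fin N → Fin N → Kˣ, (∀ k l : Fin N, l < k → sq k l ^ 2 = lam2 k l) ∧
    ∀ g ∈ Subgroup.closure {u : Kˣ | ∃ k l : Fin N, l < k ∧ u = sq k l}, g ^ 2 = 1 → g = 1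

/-- Condition (B): there exist positive integers `d_n`, `n ∈ range η`, such that
`(λ*_k)^{d_{η(l)}} = (λ*_l)^{d_{η(k)}}` for all exchangeable `k, l`. -/
def CondB (η : Fin N → ℤ) (lamstar : Fin N → K) : Prop :=
  ∃ d : ℤ → ℕ, (∀ n ∈ Set.range η, 0 < d n) ∧
    ∀ k ∈ exSet η, ∀ l ∈ exSet η, lamstar k ^ d (η l) = lamstar l ^ d (η k)

/-- The defining conditions for the exchange matrix `B̃ ∈ M_{N×ex}(ℤ)`:  columns indexed
outside `ex` vanish; `Ω(Σ_l b_{lk} ē_l, ē_n)` equals `λ*_n` for `k = n` and `1` otherwise;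
and the products `y_1^{b_{1k}} ⋯ y_N^{b_{Nk}}` are fixed under `H`, i.e. the characters
`χ_{y_l}` of the `y_l` satisfy `Σ_l b_{lk} χ_{y_l} = 0`. -/
def IsExchangeMatrix (lam2 : Fin N → Fin N → Kˣ) (η : Fin N → ℤ) (lamstar : Fin N → K)
    (chiy : Fin N → Fin r → ℤ) (B : Fin N → Fin N → ℤ) : Prop :=
  (∀ k : Fin N, k ∉ exSet η → ∀ l, B l k = 0) ∧
  (∀ k ∈ exSet η, ∀ n : Fin N,
    ((Omega K lam2 (fun j => ∑ l, B l k * ebar η l j) (ebar η n) : Kˣ) : K) =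
      (if k = n then lamstar n else 1)) ∧
  (∀ k ∈ exSet η, ∀ i : Fin r, (∑ l, B l k * chiy l i) = 0)

/-- `ι : R →ₐ[K] D` realizes the division ring `D` as the division ring of fractions
`Fract R`:  `ι` is injective and every element of `D` is a right fraction `ι(a) ι(b)⁻¹`. -/
def IsFractionEmb {D : Type v} [DivisionRing D] [Algebra K D] (ι : R →ₐ[K] D) : Prop :=
  Function.Injective ι ∧ ∀ d : D, ∃ a b : R, b ≠ 0 ∧ d * ι b = ι a

end Prime

/-!
A symmetric quantum nilpotent algebra is a skew polynomial extension of each of its interval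
subalgebras in two ways, adjoining `x_l` on the right or `x_i` on the left, and the proof plays the
two presentations off against each other.

Starting from the homogeneous prime elements `y_l`, replace `y_l` by its leading coefficient with
respect to `x_0`, then to `x_1`, and so on. At level `i` this leaves homogeneous normal elements of
the subalgebras generated by `x_i, …, x_l`. They show that, for consecutive indices `k < j` of a
level set of `η`, `δ_j(x_k) ≠ 0` whereas `δ_j(x_t) = 0` for `k < t < j`. Expanding
`x_j x_k δ_j(x_k)` in both presentations then forces `λ_j λ*_k = 1`.

For three consecutive indices `k < j < l`, the element `g = x_j x_k - (1 - λ*_k)⁻¹ δ_j(x_k)` is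
normal and `q`-commutes with `x_j`. Applying `δ_l` to the latter relation and keeping the ordered
monomials without `x_j` leaves `(1 - (1 - λ*_j) (1 - λ*_k)⁻¹) δ_j(x_k) δ_l(x_j) = 0`, that is
`λ*_j = λ*_k`. Both claims follow by moving along the level set.
-/

/-! ### Skew polynomial extensions -/

section Ore

variable {K : Type u} [CommRing K] {R : Type v} [Ring R] [Algebra K R]

/-- The left `A`-combinations of `1, x, …, x ^ (n - 1)`: skew polynomials of degree `< n` in `x`,
with coefficients in the subalgebra `A` written on the left. -/
def degLT (A : Subalgebra K R) (x : R) : ℕ → Submodule K R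
  | 0 => ⊥
  | n + 1 => degLT A x n ⊔ (Subalgebra.toSubmodule A).map (LinearMap.mulRight K (x ^ n))

/-- `A` is stable under `σ ^ (± 1)` and under `a ↦ x * a - σ a * x`; no freeness over `A` is
required. -/
structure IsSkewStable (A : Subalgebra K R) (x : R) (σ : R ≃ₐ[K] R) : Prop where
  map_mem_iff : ∀ a, σ a ∈ A ↔ a ∈ A
  comm_mem : ∀ a ∈ A, x * a - σ a * x ∈ A

/-- The subalgebra generated by `A` and `x` is the skew polynomial extension `A[x; σ, δ]` with
`δ a = x * a - σ a * x`: besides skew stability, the powers of `x` are left independent over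
`A`. -/
structure IsOreExtension (A : Subalgebra K R) (x : R) (σ : R ≃ₐ[K] R) : Prop
    extends IsSkewStable A x σ where
  eq_zero_of_mul_pow_mem : ∀ n, ∀ a ∈ A, a * x ^ n ∈ degLT A x n → a = 0

variable {A A' : Subalgebra K R} {x : R} {σ : R ≃ₐ[K] R} {n m : ℕ}

section degLT

theorem mem_degLT_zero {w : R} : w ∈ degLT A x 0 ↔ w = 0 := by
  rw [degLT, Submodule.mem_bot]

theorem mem_degLT_succ {w : R} :
    w ∈ degLT A x (n + 1) ↔ ∃ a ∈ A, w - a * x ^ n ∈ degLT A x n := by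
  rw [degLT, Submodule.mem_sup]
  constructor
  · rintro ⟨y, hy, _, ⟨a, ha, rfl⟩, rfl⟩
    exact ⟨a, ha, by simpa using hy⟩
  · rintro ⟨a, ha, h⟩
    exact ⟨_, h, a * x ^ n, ⟨a, ha, rfl⟩, by simp⟩

theorem mem_degLT_one {w : R} : w ∈ degLT A x 1 ↔ w ∈ A := by
  simp only [mem_degLT_succ, mem_degLT_zero, pow_zero, mul_one, sub_eq_zero, exists_eq_right']

theorem mem_degLT_two {w : R} : w ∈ degLT A x 2 ↔ ∃ a ∈ A, ∃ b ∈ A, w = a * x + b := by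
  simp only [mem_degLT_succ (n := 1), mem_degLT_one, pow_one]
  constructor
  · rintro ⟨a, ha, h⟩
    exact ⟨a, ha, _, h, by simp⟩
  · rintro ⟨a, ha, b, hb, rfl⟩
    exact ⟨a, ha, by simpa using hb⟩

theorem degLT_mono : Monotone (degLT A x) :=
  monotone_nat_of_le_succ fun _ => le_sup_left

theorem mul_pow_mem_degLT {a : R} (ha : a ∈ A) (n : ℕ) : a * x ^ n ∈ degLT A x (n + 1) :=
  mem_degLT_succ.2 ⟨a, ha, by simp⟩

theorem degLT_le_of_le (h : A ≤ A') (x : R) (n : ℕ) : degLT A x n ≤ degLT A' x n := by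
  induction n with
  | zero => exact le_rfl
  | succ n ih => exact sup_le_sup ih (Submodule.map_mono h)

theorem degLT_le_toSubmodule (h : A ≤ A') (hx : x ∈ A') (n : ℕ) :
    degLT A x n ≤ Subalgebra.toSubmodule A' := by
  induction n with
  | zero => exact bot_le
  | succ n ih =>
    refine sup_le ih ?_
    rintro _ ⟨a, ha, rfl⟩
    exact A'.mul_mem (h ha) (A'.pow_mem hx n)

theorem coeff_mul_mem_degLT {a w : R} (ha : a ∈ A) (hw : w ∈ degLT A x n) :
    a * w ∈ degLT A x n := by
  induction n generalizing w with
  | zero => rw [mem_degLT_zero] at *; simp [hw]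
  | succ n ih =>
    obtain ⟨b, hb, h⟩ := mem_degLT_succ.1 hw
    refine mem_degLT_succ.2 ⟨a * b, mul_mem ha hb, ?_⟩
    rw [mul_assoc, ← mul_sub]
    exact ih h

theorem mul_gen_mem_degLT {w : R} (hw : w ∈ degLT A x n) : w * x ∈ degLT A x (n + 1) := by
  induction n generalizing w with
  | zero => rw [mem_degLT_zero] at hw; simp [hw]
  | succ n ih =>
    obtain ⟨b, hb, h⟩ := mem_degLT_succ.1 hw
    refine mem_degLT_succ.2 ⟨b, hb, ?_⟩
    rw [pow_succ, ← mul_assoc, ← sub_mul]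
    exact ih h

theorem mul_gen_pow_mem_degLT {w : R} (hw : w ∈ degLT A x n) (m : ℕ) :
    w * x ^ m ∈ degLT A x (n + m) := by
  induction m with
  | zero => simpa using hw
  | succ m ih => rw [pow_succ, ← mul_assoc]; exact mul_gen_mem_degLT ih

end degLT

namespace IsSkewStable

theorem pow_apply_mem_iff (O : IsSkewStable A x σ) (n : ℕ) (a : R) : (σ ^ n) a ∈ A ↔ a ∈ A := by
  induction n with
  | zero => simp
  | succ n ih => rw [pow_succ', AlgEquiv.mul_apply, O.map_mem_iff, ih]

theorem gen_mul_mem_degLT (O : IsSkewStable A x σ) {w : R} (hw : w ∈ degLT A x n) :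
    x * w ∈ degLT A x (n + 1) := by
  induction n generalizing w with
  | zero => rw [mem_degLT_zero] at hw; simp [hw]
  | succ n ih =>
    obtain ⟨b, hb, h⟩ := mem_degLT_succ.1 hw
    refine mem_degLT_succ.2 ⟨σ b, (O.map_mem_iff b).2 hb, ?_⟩
    convert add_mem (ih h) (mul_pow_mem_degLT (x := x) (O.comm_mem b hb) n) using 1
    rw [pow_succ']; noncomm_ring

theorem gen_pow_mul_mem_degLT (O : IsSkewStable A x σ) {w : R} (hw : w ∈ degLT A x n) (m : ℕ) :
    x ^ m * w ∈ degLT A x (n + m) := by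
  induction m with
  | zero => simpa using hw
  | succ m ih => rw [pow_succ', mul_assoc]; exact O.gen_mul_mem_degLT ih

theorem gen_pow_mul_sub_mem_degLT (O : IsSkewStable A x σ) {a : R} (ha : a ∈ A) (n : ℕ) :
    x ^ n * a - (σ ^ n) a * x ^ n ∈ degLT A x n := by
  induction n with
  | zero => simp
  | succ n ih =>
    have h := mul_pow_mem_degLT (x := x) (O.comm_mem _ ((O.pow_apply_mem_iff n a).2 ha)) n
    convert add_mem (O.gen_mul_mem_degLT ih) h using 1
    rw [pow_succ', pow_succ', AlgEquiv.mul_apply]; noncomm_ring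

theorem mul_mem_degLT (O : IsSkewStable A x σ) {w z : R} (hw : w ∈ degLT A x n)
    (hz : z ∈ degLT A x (m + 1)) : w * z ∈ degLT A x (n + m) := by
  induction n generalizing w with
  | zero => rw [mem_degLT_zero] at hw; simp [hw]
  | succ n ih =>
    obtain ⟨b, hb, h⟩ := mem_degLT_succ.1 hw
    have h₁ := degLT_mono (show n + m ≤ n + 1 + m by omega) (ih h)
    have h₂ := coeff_mul_mem_degLT hb (O.gen_pow_mul_mem_degLT hz n)
    rw [show m + 1 + n = n + 1 + m by omega] at h₂
    convert add_mem h₁ h₂ using 1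
    noncomm_ring

theorem mul_sub_lead_mem_degLT (O : IsSkewStable A x σ) {w z a b : R} (ha : a ∈ A) (hb : b ∈ A)
    (hw : w - a * x ^ n ∈ degLT A x n) (hz : z - b * x ^ m ∈ degLT A x m) :
    w * z - a * (σ ^ n) b * x ^ (n + m) ∈ degLT A x (n + m) := by
  have h₁ := O.mul_mem_degLT hw (mem_degLT_succ.2 ⟨b, hb, hz⟩)
  have h₂ := coeff_mul_mem_degLT ha (O.gen_pow_mul_mem_degLT hz n)
  rw [add_comm m n] at h₂
  have h₃ := coeff_mul_mem_degLT ha (mul_gen_pow_mem_degLT (O.gen_pow_mul_sub_mem_degLT hb n) m)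
  convert add_mem (add_mem h₁ h₂) h₃ using 1
  rw [pow_add]; noncomm_ring

theorem mem_adjoin_insert_iff {T : Set R} (O : IsSkewStable (Algebra.adjoin K T) x σ) {w : R} :
    w ∈ Algebra.adjoin K (insert x T) ↔ ∃ n, w ∈ degLT (Algebra.adjoin K T) x n := by
  constructor
  · intro hw
    induction hw using Algebra.adjoin_induction with
    | mem s hs =>
      rcases hs with rfl | hs
      · exact ⟨2, mem_degLT_two.2 ⟨1, one_mem _, 0, zero_mem _, by simp⟩⟩
      · exact ⟨1, mem_degLT_one.2 (Algebra.subset_adjoin hs)⟩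
    | algebraMap c => exact ⟨1, mem_degLT_one.2 (algebraMap_mem _ _)⟩
    | add y z _ _ hy hz =>
      obtain ⟨n, hn⟩ := hy
      obtain ⟨m, hm⟩ := hz
      exact ⟨max n m,
        add_mem (degLT_mono (le_max_left _ _) hn) (degLT_mono (le_max_right _ _) hm)⟩
    | mul y z _ _ hy hz =>
      obtain ⟨n, hn⟩ := hy
      obtain ⟨m, hm⟩ := hz
      exact ⟨n + m, O.mul_mem_degLT hn (degLT_mono m.le_succ hm)⟩
  · rintro ⟨n, hn⟩
    exact degLT_le_toSubmodule (Algebra.adjoin_mono (Set.subset_insert x T))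
      (Algebra.subset_adjoin (Set.mem_insert x T)) n hn

theorem degLT_induction_right (O : IsSkewStable A x σ) (M : Submodule K R)
    (hM : ∀ n, ∀ a ∈ A, x ^ n * a ∈ M) (n : ℕ) : degLT A x n ≤ M := by
  induction n with
  | zero => exact bot_le
  | succ n ih =>
    refine sup_le ih ?_
    rintro _ ⟨b, hb, rfl⟩
    obtain ⟨a, rfl⟩ := (σ ^ n).surjective b
    rw [SetLike.mem_coe, Subalgebra.mem_toSubmodule, O.pow_apply_mem_iff] at hb
    simpa using sub_mem (hM n a hb) (ih (O.gen_pow_mul_sub_mem_degLT hb n))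

end IsSkewStable

namespace IsOreExtension

theorem lead_unique (O : IsOreExtension A x σ) {w a a' : R} (ha : a ∈ A) (ha' : a' ∈ A)
    (h : w - a * x ^ n ∈ degLT A x n) (h' : w - a' * x ^ n ∈ degLT A x n) : a = a' := by
  rw [← sub_eq_zero]
  refine O.eq_zero_of_mul_pow_mem n _ (sub_mem ha ha') ?_
  convert sub_mem h' h using 1
  noncomm_ring

theorem lead_eq_zero (O : IsOreExtension A x σ) {w a : R} (ha : a ∈ A)
    (h : w - a * x ^ n ∈ degLT A x n) (hw : w ∈ degLT A x n) : a = 0 :=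
  O.lead_unique ha (zero_mem _) h (by simpa using hw)

theorem linear_unique (O : IsOreExtension A x σ) {a b a' b' : R} (ha : a ∈ A) (hb : b ∈ A)
    (ha' : a' ∈ A) (hb' : b' ∈ A) (h : a * x + b = a' * x + b') : a = a' ∧ b = b' := by
  obtain rfl : a = a' := by
    refine O.lead_unique (w := a * x + b) (n := 1) ha ha' ?_ ?_
    · exact mem_degLT_one.2 (by simpa using hb)
    · rw [h]; exact mem_degLT_one.2 (by simpa using hb')
  exact ⟨rfl, add_left_cancel h⟩

theorem quadratic_unique (O : IsOreExtension A x σ) {a b c a' b' c' : R} (ha : a ∈ A) (hb : b ∈ A)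
    (hc : c ∈ A) (ha' : a' ∈ A) (hb' : b' ∈ A) (hc' : c' ∈ A)
    (h : a * x ^ 2 + (b * x + c) = a' * x ^ 2 + (b' * x + c')) : a = a' ∧ b = b' ∧ c = c' := by
  obtain rfl : a = a' := by
    refine O.lead_unique (w := a * x ^ 2 + (b * x + c)) (n := 2) ha ha' ?_ ?_
    · exact mem_degLT_two.2 ⟨b, hb, c, hc, by noncomm_ring⟩
    · rw [h]; exact mem_degLT_two.2 ⟨b', hb', c', hc', by noncomm_ring⟩
  exact ⟨rfl, O.linear_unique hb hc hb' hc' (add_left_cancel h)⟩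

theorem of_le (O : IsOreExtension A x σ) (h : A' ≤ A) (O' : IsSkewStable A' x σ) :
    IsOreExtension A' x σ where
  toIsSkewStable := O'
  eq_zero_of_mul_pow_mem n a ha hn :=
    O.eq_zero_of_mul_pow_mem n a (h ha) (degLT_le_of_le h _ _ hn)

theorem mem_degLT_of_le (O : IsOreExtension A x σ) (h : A' ≤ A) {w : R}
    (hm : w ∈ degLT A' x m) (hn : w ∈ degLT A x n) : w ∈ degLT A' x n := by
  induction m with
  | zero => exact degLT_mono n.zero_le hm
  | succ q ih =>
    by_cases hq : q + 1 ≤ n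
    · exact degLT_mono hq hm
    obtain ⟨b, hb, hw⟩ := mem_degLT_succ.1 hm
    obtain rfl := O.lead_eq_zero (h hb) (degLT_le_of_le h _ _ hw)
      (degLT_mono (show n ≤ q by omega) hn)
    exact ih (by simpa using hw)

theorem mem_of_mul_gen_add_mem (O : IsOreExtension A x σ) (h : A' ≤ A) {a b : R} (ha : a ∈ A)
    (hb : b ∈ A) (hn : a * x + b ∈ degLT A' x n) : a ∈ A' ∧ b ∈ A' := by
  obtain ⟨a', ha', b', hb', e⟩ := mem_degLT_two.1
    (O.mem_degLT_of_le h hn (mem_degLT_two.2 ⟨a, ha, b, hb, rfl⟩))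
  obtain ⟨rfl, rfl⟩ := O.linear_unique ha hb (h ha') (h hb') e
  exact ⟨ha', hb'⟩

theorem eq_zero_of_mul_gen_mem (O : IsOreExtension A x σ) {w : R} (hw : w ∈ degLT A x n)
    (h : w * x ∈ A) : w = 0 := by
  induction n with
  | zero => exact mem_degLT_zero.1 hw
  | succ n ih =>
    obtain ⟨c, hc, hw'⟩ := mem_degLT_succ.1 hw
    have hlead : w * x - c * x ^ (n + 1) ∈ degLT A x (n + 1) := by
      rw [pow_succ, ← mul_assoc, ← sub_mul]
      exact mul_gen_mem_degLT hw'
    obtain rfl := O.lead_eq_zero hc hlead (degLT_mono (by omega) (mem_degLT_one.2 h))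
    exact ih (by simpa using hw')

theorem mul_eq_zero_imp (O : IsOreExtension A x σ)
    (hA : ∀ a ∈ A, ∀ b ∈ A, a * b = 0 → a = 0 ∨ b = 0) {w z : R} (hw : w ∈ degLT A x n)
    (hz : z ∈ degLT A x m) (h : w * z = 0) : w = 0 ∨ z = 0 := by
  induction n with
  | zero => exact Or.inl (mem_degLT_zero.1 hw)
  | succ n ihn =>
    induction m with
    | zero => exact Or.inr (mem_degLT_zero.1 hz)
    | succ m ihm =>
      obtain ⟨a, ha, hwa⟩ := mem_degLT_succ.1 hw
      obtain ⟨b, hb, hzb⟩ := mem_degLT_succ.1 hz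
      have hσb := (O.pow_apply_mem_iff n b).2 hb
      have htop := O.lead_eq_zero (mul_mem ha hσb) (O.mul_sub_lead_mem_degLT ha hb hwa hzb)
        (by rw [h]; exact zero_mem _)
      rcases hA _ ha _ hσb htop with rfl | hb0
      · exact ihn (by simpa using hwa)
      · obtain rfl := (map_eq_zero_iff _ (σ ^ n).injective).1 hb0
        exact ihm (by simpa using hzb)

variable [NoZeroDivisors R]

theorem mem_degLT_of_lead_mul_mem (O : IsOreExtension A x σ) {w a b : R} {p : ℕ} (ha : a ∈ A)
    (ha0 : a ≠ 0) (hw : w - a * x ^ n ∈ degLT A x n) (hb : b ∈ degLT A x p)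
    (h : w * b ∈ degLT A x (n + m)) : b ∈ degLT A x m := by
  induction p with
  | zero => exact degLT_mono m.zero_le hb
  | succ q ih =>
    by_cases hq : q + 1 ≤ m
    · exact degLT_mono hq hb
    obtain ⟨c, hc, hbc⟩ := mem_degLT_succ.1 hb
    have htop := O.lead_eq_zero (mul_mem ha ((O.pow_apply_mem_iff n c).2 hc))
      (O.mul_sub_lead_mem_degLT ha hc hw hbc) (degLT_mono (show n + m ≤ n + q by omega) h)
    obtain rfl : c = 0 :=
      (map_eq_zero_iff _ (σ ^ n).injective).1 ((mul_eq_zero.1 htop).resolve_left ha0)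
    exact ih (by simpa using hbc)

theorem mem_degLT_of_mul_lead_mem (O : IsOreExtension A x σ) {w a b : R} {p : ℕ} (ha : a ∈ A)
    (ha0 : a ≠ 0) (hw : w - a * x ^ n ∈ degLT A x n) (hb : b ∈ degLT A x p)
    (h : b * w ∈ degLT A x (m + n)) : b ∈ degLT A x m := by
  induction p with
  | zero => exact degLT_mono m.zero_le hb
  | succ q ih =>
    by_cases hq : q + 1 ≤ m
    · exact degLT_mono hq hb
    obtain ⟨c, hc, hbc⟩ := mem_degLT_succ.1 hb
    have htop := O.lead_eq_zero (mul_mem hc ((O.pow_apply_mem_iff q a).2 ha))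
      (O.mul_sub_lead_mem_degLT hc ha hbc hw) (degLT_mono (show m + n ≤ q + n by omega) h)
    obtain rfl : c = 0 := (mul_eq_zero.1 htop).resolve_right
      ((map_ne_zero_iff _ (σ ^ q).injective).2 ha0)
    exact ih (by simpa using hbc)

end IsOreExtension

end Ore

/-- `P` is a normal element of the subalgebra `A`, i.e. `A * P = P * A`; that `P` lies in `A` is
not part of the definition. -/
def IsNormalIn {K : Type u} [CommRing K] {R : Type v} [Ring R] [Algebra K R] (A : Subalgebra K R)
    (P : R) : Prop :=
  (∀ a ∈ A, ∃ b ∈ A, a * P = P * b) ∧ ∀ b ∈ A, ∃ a ∈ A, a * P = P * b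

section Normal

variable {K : Type u} [CommRing K] {R : Type v} [Ring R] [Algebra K R]
  {A B : Subalgebra K R} {x : R} {σ : R ≃ₐ[K] R} {n : ℕ}

namespace IsOreExtension

theorem coeff_eigen (O : IsOreExtension A x σ) {φ : R ≃ₐ[K] R} {χ k : K} (hx : φ x = χ • x)
    {f g : R} (hf : f ∈ A) (hg : g ∈ A) (hφf : φ f ∈ A) (hφg : φ g ∈ A)
    (h : φ (f * x + g) = k • (f * x + g)) : χ • φ f = k • f ∧ φ g = k • g := by
  refine O.linear_unique (A.smul_mem hφf χ) hφg (A.smul_mem hf k) (A.smul_mem hg k) ?_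
  rw [smul_mul_assoc, smul_mul_assoc, ← smul_add, ← h, map_add, map_mul, hx, mul_smul_comm]

theorem coeff_of_mul_eq_mul (O : IsOreExtension A x σ) {a b f g : R} (ha : a ∈ A) (hb : b ∈ A)
    (hf : f ∈ A) (hg : g ∈ A) (h : a * (f * x + g) = (f * x + g) * b) :
    a * f = f * σ b ∧ a * g = f * (x * b - σ b * x) + g * b := by
  refine O.linear_unique (mul_mem ha hf) (mul_mem ha hg)
    (mul_mem hf ((O.map_mem_iff b).2 hb))
    (add_mem (mul_mem hf (O.comm_mem b hb)) (mul_mem hg hb)) ?_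
  rw [mul_assoc, ← mul_add, h]
  noncomm_ring

variable [NoZeroDivisors R]

theorem mem_of_mul_linear_eq (O : IsOreExtension A x σ) {a b f g : R} (ha : a ∈ A)
    (hb : b ∈ degLT A x n) (hf : f ∈ A) (hf0 : f ≠ 0) (hg : g ∈ A)
    (h : a * (f * x + g) = (f * x + g) * b) : b ∈ A := by
  refine mem_degLT_one.1 (O.mem_degLT_of_lead_mul_mem (n := 1) (m := 1) (w := f * x + g) hf hf0
    (mem_degLT_one.2 (by simpa using hg)) hb ?_)
  rw [← h]
  exact coeff_mul_mem_degLT ha (mem_degLT_two.2 ⟨f, hf, g, hg, rfl⟩)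

theorem mem_of_linear_mul_eq (O : IsOreExtension A x σ) {a b f g : R} (ha : a ∈ degLT A x n)
    (hb : b ∈ A) (hf : f ∈ A) (hf0 : f ≠ 0) (hg : g ∈ A)
    (h : a * (f * x + g) = (f * x + g) * b) : a ∈ A := by
  refine mem_degLT_one.1 (O.mem_degLT_of_mul_lead_mem (n := 1) (m := 1) (w := f * x + g) hf hf0
    (mem_degLT_one.2 (by simpa using hg)) ha ?_)
  rw [h]
  exact O.mul_mem_degLT (m := 0) (mem_degLT_two.2 ⟨f, hf, g, hg, rfl⟩) (mem_degLT_one.2 hb)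

theorem isNormalIn_coeff (O : IsOreExtension A x σ) (hB : ∀ w, w ∈ B ↔ ∃ n, w ∈ degLT A x n)
    {f g : R} (hf : f ∈ A) (hf0 : f ≠ 0) (hg : g ∈ A) (h : IsNormalIn B (f * x + g)) :
    IsNormalIn A f := by
  have hAB : A ≤ B := fun a ha => (hB a).2 ⟨1, mem_degLT_one.2 ha⟩
  refine ⟨fun a ha => ?_, fun b hb => ?_⟩
  · obtain ⟨b, hb, e⟩ := h.1 a (hAB ha)
    obtain ⟨n, hn⟩ := (hB b).1 hb
    have hbA := O.mem_of_mul_linear_eq ha hn hf hf0 hg e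
    exact ⟨σ b, (O.map_mem_iff b).2 hbA, (O.coeff_of_mul_eq_mul ha hbA hf hg e).1⟩
  · obtain ⟨b, rfl⟩ := σ.surjective b
    rw [O.map_mem_iff] at hb
    obtain ⟨a, ha, e⟩ := h.2 b (hAB hb)
    obtain ⟨n, hn⟩ := (hB a).1 ha
    have haA := O.mem_of_linear_mul_eq hn hb hf hf0 hg e
    exact ⟨a, haA, (O.coeff_of_mul_eq_mul haA hb hf hg e).1⟩

theorem comm_eq_zero_of_isNormalIn (O : IsOreExtension A x σ)
    (hB : ∀ w, w ∈ B ↔ ∃ n, w ∈ degLT A x n) {f : R} (hf : f ∈ A) (hf0 : f ≠ 0)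
    (h : IsNormalIn B (f * x)) {a : R} (ha : a ∈ A) : x * a - σ a * x = 0 := by
  obtain ⟨c, hc, e⟩ := h.2 a ((hB a).2 ⟨1, mem_degLT_one.2 ha⟩)
  obtain ⟨n, hn⟩ := (hB c).1 hc
  have hfδ : f * (x * a - σ a * x) = (c * f - f * σ a) * x := by
    rw [mul_sub, ← mul_assoc, ← e]; noncomm_ring
  have hdeg : c * f - f * σ a ∈ degLT A x (n + 1) :=
    sub_mem (O.mul_mem_degLT hn (degLT_mono one_le_two (mem_degLT_one.2 hf)))
      (degLT_mono (by omega) (mem_degLT_one.2 (mul_mem hf ((O.map_mem_iff a).2 ha))))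
  have h0 := O.eq_zero_of_mul_gen_mem hdeg (hfδ ▸ mul_mem hf (O.comm_mem a ha))
  rw [h0, zero_mul] at hfδ
  exact (mul_eq_zero.1 hfδ).resolve_left hf0

theorem exists_comm_eq_mul (O : IsOreExtension A x σ) {b f : R} (hf : f ∈ A) (hf0 : f ≠ 0)
    (hb : b ∈ degLT A x n) (h : x * f = f * b) : ∃ b₀ ∈ A, x * f - σ f * x = f * b₀ := by
  obtain ⟨b₁, hb₁, b₀, hb₀, rfl⟩ := mem_degLT_two.1
    (O.mem_degLT_of_lead_mul_mem (w := f) (n := 0) (m := 2) hf hf0 (by simp) hb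
      (h ▸ O.gen_mul_mem_degLT (mem_degLT_one.2 hf)))
  refine ⟨b₀, hb₀, (O.linear_unique ((O.map_mem_iff f).2 hf) (O.comm_mem f hf) (mul_mem hf hb₁)
    (mul_mem hf hb₀) ?_).2⟩
  rw [add_sub_cancel, h, mul_add, mul_assoc]

theorem gen_mul_linear_eq (O : IsOreExtension A x σ) {b f g : R} {s : K} (hf : f ∈ A)
    (hf0 : f ≠ 0) (hg : g ∈ A) (hσ : σ f = s • f) (hb : b ∈ degLT A x n)
    (h : x * (f * x + g) = (f * x + g) * b) : ∃ b₀ ∈ A, b = s • x + b₀ := by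
  have hY : f * x + g ∈ degLT A x 2 := mem_degLT_two.2 ⟨f, hf, g, hg, rfl⟩
  have hlead : f * x + g - f * x ^ 1 ∈ degLT A x 1 := mem_degLT_one.2 (by simpa using hg)
  obtain ⟨b₁, hb₁, b₀, hb₀, rfl⟩ := mem_degLT_two.1
    (O.mem_degLT_of_lead_mul_mem (n := 1) (m := 2) hf hf0 hlead hb
      (h ▸ O.gen_mul_mem_degLT hY))
  have hxlead := O.mul_sub_lead_mem_degLT (n := 1) (m := 1) (w := x) (one_mem A) hf (by simp) hlead
  have hblead := O.mul_sub_lead_mem_degLT (n := 1) (m := 1) (z := b₁ * x + b₀) hf hb₁ hlead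
    (mem_degLT_one.2 (by simpa using hb₀))
  rw [h] at hxlead
  have heq := O.lead_unique (mul_mem (one_mem A) ((O.pow_apply_mem_iff 1 f).2 hf))
    (mul_mem hf ((O.pow_apply_mem_iff 1 b₁).2 hb₁)) hxlead hblead
  rw [pow_one, one_mul, hσ, ← mul_smul_one s f] at heq
  have hb₁' : b₁ = s • 1 :=
    σ.injective (by rw [map_smul, map_one, mul_left_cancel₀ hf0 heq])
  exact ⟨b₀, hb₀, by rw [hb₁', smul_one_mul]⟩

end IsOreExtension

end Normal

section Lead

variable {K : Type u} [CommRing K] {R : Type v} [Ring R] [Algebra K R]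
  {A A' B : Subalgebra K R} {x : R} {σ φ : R ≃ₐ[K] R} {n m : ℕ}

theorem exists_lead_of_notMem_degLT {w : R} (hm : w ∈ degLT A x m) (hn : w ∉ degLT A x n) :
    ∃ k, n ≤ k ∧ ∃ f ∈ A, f ≠ 0 ∧ w - f * x ^ k ∈ degLT A x k := by
  induction m with
  | zero => exact absurd (degLT_mono n.zero_le hm) hn
  | succ m ih =>
    obtain ⟨f, hf, h⟩ := mem_degLT_succ.1 hm
    by_cases hf0 : f = 0
    · exact ih (by simpa [hf0] using h)
    · refine ⟨m, ?_, f, hf, hf0, h⟩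
      by_contra! hlt
      exact hn (degLT_mono hlt hm)

theorem map_mem_degLT {χ : K} (hx : φ x = χ • x) (hφ : ∀ a ∈ A, φ a ∈ A) {w : R}
    (hw : w ∈ degLT A x n) : φ w ∈ degLT A x n := by
  induction n generalizing w with
  | zero => simpa only [mem_degLT_zero, map_eq_zero_iff φ φ.injective] using hw
  | succ n ih =>
    obtain ⟨f, hf, h⟩ := mem_degLT_succ.1 hw
    refine mem_degLT_succ.2 ⟨χ ^ n • φ f, A.smul_mem (hφ f hf) _, ?_⟩
    simpa only [map_sub, map_mul, map_pow, hx, smul_pow, mul_smul_comm, smul_mul_assoc] using ih h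

namespace IsOreExtension

theorem lead_mem_of_le (O : IsOreExtension A x σ) (h : A' ≤ A) {f g : R}
    (hg : g ∈ degLT A' x m) (hf : f ∈ A) (hlead : g - f * x ^ n ∈ degLT A x n) : f ∈ A' := by
  obtain ⟨f', hf', hlead'⟩ := mem_degLT_succ.1
    (O.mem_degLT_of_le h hg (mem_degLT_succ.2 ⟨f, hf, hlead⟩))
  rwa [O.lead_unique hf (h hf') hlead (degLT_le_of_le h x n hlead')]

theorem lead_of_mul_eq_mul (O : IsOreExtension A x σ) {a b f w : R} (ha : a ∈ A) (hb : b ∈ A)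
    (hf : f ∈ A) (hlead : w - f * x ^ n ∈ degLT A x n) (h : a * w = w * b) :
    a * f = f * (σ ^ n) b := by
  have hleft := coeff_mul_mem_degLT ha hlead
  have hright := O.mul_sub_lead_mem_degLT (m := 0) hf hb hlead (z := b) (by simp)
  rw [mul_sub, ← mul_assoc, h] at hleft
  exact O.lead_unique (mul_mem ha hf) (mul_mem hf ((O.pow_apply_mem_iff n b).2 hb)) hleft hright

theorem lead_eigen (O : IsOreExtension A x σ) {χ k : K} (hx : φ x = χ • x)
    (hφ : ∀ a ∈ A, φ a ∈ A) {f w : R} (hf : f ∈ A) (hlead : w - f * x ^ n ∈ degLT A x n)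
    (hw : φ w = k • w) : χ ^ n • φ f = k • f := by
  have hleft := map_mem_degLT hx hφ hlead
  have hright := Submodule.smul_mem _ k hlead
  rw [map_sub, map_mul, map_pow, hx, smul_pow, mul_smul_comm, ← smul_mul_assoc, hw] at hleft
  rw [smul_sub, ← smul_mul_assoc] at hright
  exact O.lead_unique (A.smul_mem (hφ f hf) _) (A.smul_mem hf _) hleft hright

theorem coeff_mul_add (O : IsOreExtension B x σ) (hAB : A ≤ B) {f e f' e' z g : R} (hf : f ∈ B)
    (he : e ∈ B) (hz : z ∈ B) (hf' : f' ∈ A) (he' : e' ∈ A) (hg : g ∈ degLT A x n)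
    (h : f * x + e = (f' * x + e') * z + g) : ∃ c ∈ A, f = f' * σ z + c := by
  have hprod : (f' * x + e') * z = f' * σ z * x + (f' * (x * z - σ z * x) + e' * z) := by
    noncomm_ring
  have hfz := mul_mem (hAB hf') ((O.map_mem_iff z).2 hz)
  have hez := add_mem (mul_mem (hAB hf') (O.comm_mem z hz)) (mul_mem (hAB he') hz)
  obtain ⟨c, hc, d, hd, rfl⟩ := mem_degLT_two.1 (O.mem_degLT_of_le hAB hg (n := 2) (by
    rw [← add_sub_cancel_left ((f' * x + e') * z) g, ← h, hprod]
    exact sub_mem (mem_degLT_two.2 ⟨f, hf, e, he, rfl⟩) (mem_degLT_two.2 ⟨_, hfz, _, hez, rfl⟩)))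
  refine ⟨c, hc, (O.linear_unique hf he (add_mem hfz (hAB hc)) (add_mem hez (hAB hd)) ?_).1⟩
  rw [h, hprod]
  noncomm_ring

theorem isNormalIn_of_mem [NoZeroDivisors R] (O : IsOreExtension A x σ)
    (hB : ∀ w, w ∈ B ↔ ∃ n, w ∈ degLT A x n) {P : R} (hP : P ∈ A) (hP0 : P ≠ 0)
    (h : IsNormalIn B P) : IsNormalIn A P := by
  have hAB : A ≤ B := fun a ha => (hB a).2 ⟨1, mem_degLT_one.2 ha⟩
  refine ⟨fun a ha => ?_, fun b hb => ?_⟩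
  · obtain ⟨b, hb, e⟩ := h.1 a (hAB ha)
    obtain ⟨n, hn⟩ := (hB b).1 hb
    exact ⟨b, mem_degLT_one.1 (O.mem_degLT_of_lead_mul_mem (n := 0) (m := 1) hP hP0 (by simp) hn
      (mem_degLT_one.2 (e ▸ mul_mem ha hP))), e⟩
  · obtain ⟨a, ha, e⟩ := h.2 b (hAB hb)
    obtain ⟨n, hn⟩ := (hB a).1 ha
    exact ⟨a, mem_degLT_one.1 (O.mem_degLT_of_mul_lead_mem (n := 0) (m := 1) hP hP0 (by simp) hn
      (mem_degLT_one.2 (e ▸ mul_mem hP hb))), e⟩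

end IsOreExtension

end Lead

section OreField

variable {K : Type u} [Field K] {R : Type v} [Ring R] [Algebra K R] {A : Subalgebra K R}
  {x P : R} {σ : R ≃ₐ[K] R} {n : ℕ}

theorem exists_mul_or_lead_not_dvd {w : R} (hw : w ∈ degLT A x n) :
    (∃ d ∈ degLT A x n, w = P * d) ∨ ∃ k, ∃ d ∈ degLT A x n, ∃ c ∈ A,
      (¬ ∃ z ∈ A, c = P * z) ∧ w - P * d - c * x ^ k ∈ degLT A x k := by
  induction n generalizing w with
  | zero => exact Or.inl ⟨0, zero_mem _, by rw [mem_degLT_zero.1 hw, mul_zero]⟩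
  | succ n ih =>
    obtain ⟨c, hc, hwc⟩ := mem_degLT_succ.1 hw
    by_cases hdvd : ∃ z ∈ A, c = P * z
    · obtain ⟨z, hz, rfl⟩ := hdvd
      have hzn := mul_pow_mem_degLT (x := x) hz n
      have hmono : degLT A x n ≤ degLT A x (n + 1) := degLT_mono n.le_succ
      rcases ih hwc with ⟨d, hd, e⟩ | ⟨k, d, hd, c', hc', hndvd, h⟩
      · exact Or.inl ⟨d + z * x ^ n, add_mem (hmono hd) hzn, by
          rw [mul_add, ← e, ← mul_assoc, sub_add_cancel]⟩
      · refine Or.inr ⟨k, d + z * x ^ n, add_mem (hmono hd) hzn, c', hc', hndvd, ?_⟩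
        convert h using 1
        noncomm_ring
    · exact Or.inr ⟨n, 0, zero_mem _, c, hc, hdvd, by simpa using hwc⟩

theorem isNormalIn_adjoin {T : Set R}
    (hl : ∀ t ∈ T, ∃ b ∈ Algebra.adjoin K T, t * P = P * b)
    (hr : ∀ t ∈ T, ∃ a ∈ Algebra.adjoin K T, a * P = P * t) :
    IsNormalIn (Algebra.adjoin K T) P := by
  constructor <;> intro w hw
  · induction hw using Algebra.adjoin_induction with
    | mem t ht => exact hl t ht
    | algebraMap c => exact ⟨_, algebraMap_mem _ c, Algebra.commutes c P⟩
    | add y z _ _ hy hz =>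
      obtain ⟨⟨y', hy', ey⟩, z', hz', ez⟩ := hy, hz
      exact ⟨y' + z', add_mem hy' hz', by rw [add_mul, mul_add, ey, ez]⟩
    | mul y z _ _ hy hz =>
      obtain ⟨⟨y', hy', ey⟩, z', hz', ez⟩ := hy, hz
      exact ⟨y' * z', mul_mem hy' hz', by rw [mul_assoc, ez, ← mul_assoc, ey, mul_assoc]⟩
  · induction hw using Algebra.adjoin_induction with
    | mem t ht => exact hr t ht
    | algebraMap c => exact ⟨_, algebraMap_mem _ c, Algebra.commutes c P⟩
    | add y z _ _ hy hz =>
      obtain ⟨⟨y', hy', ey⟩, z', hz', ez⟩ := hy, hz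
      exact ⟨y' + z', add_mem hy' hz', by rw [add_mul, mul_add, ey, ez]⟩
    | mul y z _ _ hy hz =>
      obtain ⟨⟨y', hy', ey⟩, z', hz', ez⟩ := hy, hz
      exact ⟨y' * z', mul_mem hy' hz', by rw [mul_assoc, ez, ← mul_assoc, ey, mul_assoc]⟩

theorem isNormalIn_adjoin_insert {T : Set R} {s : K} (hs : s ≠ 0) (hx : x * P = s • (P * x))
    (h : IsNormalIn (Algebra.adjoin K T) P) : IsNormalIn (Algebra.adjoin K (insert x T)) P := by
  have hle : Algebra.adjoin K T ≤ Algebra.adjoin K (insert x T) :=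
    Algebra.adjoin_mono (Set.subset_insert x T)
  have hxmem (k : K) : k • x ∈ Algebra.adjoin K (insert x T) :=
    Subalgebra.smul_mem _ (Algebra.subset_adjoin (Set.mem_insert x T)) k
  refine isNormalIn_adjoin ?_ ?_ <;> rintro t (rfl | ht)
  · exact ⟨s • t, hxmem s, by rw [hx, mul_smul_comm]⟩
  · exact (h.1 t (Algebra.subset_adjoin ht)).imp fun _ hb => ⟨hle hb.1, hb.2⟩
  · exact ⟨s⁻¹ • t, hxmem _, by rw [smul_mul_assoc, hx, smul_smul, inv_mul_cancel₀ hs, one_smul]⟩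
  · exact (h.2 t (Algebra.subset_adjoin ht)).imp fun _ ha => ⟨hle ha.1, ha.2⟩

theorem pow_apply_eq_smul {s : K} (hσ : σ P = s • P) (n : ℕ) : (σ ^ n) P = s ^ n • P := by
  induction n with
  | zero => simp
  | succ n ih => rw [pow_succ', AlgEquiv.mul_apply, ih, map_smul, hσ, smul_smul, pow_succ]

theorem IsSkewStable.dvd_of_dvd_pow_apply (O : IsSkewStable A x σ) {s : K} (hs : s ≠ 0)
    (hσ : σ P = s • P) {β w : R} (hw : w ∈ A) (h : (σ ^ n) β = P * w) : ∃ z ∈ A, β = P * z := by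
  obtain ⟨w, rfl⟩ := (σ ^ n).surjective w
  refine ⟨(s ^ n)⁻¹ • w, A.smul_mem ((O.pow_apply_mem_iff n w).1 hw) _, (σ ^ n).injective ?_⟩
  rw [h, map_mul, map_smul, pow_apply_eq_smul hσ n, smul_mul_smul_comm,
    mul_inv_cancel₀ (pow_ne_zero n hs), one_smul]

namespace IsOreExtension

theorem exists_lead_eq_mul [NoZeroDivisors R] (O : IsOreExtension A x σ) {d c : R} {k : ℕ}
    (hP : P ∈ A) (hP0 : P ≠ 0) (hc : c ∈ A) (hd : d ∈ degLT A x k)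
    (h : P * d - c * x ^ n ∈ degLT A x n) : ∃ z ∈ A, c = P * z := by
  have hPd : P * d ∈ degLT A x (0 + (n + 1)) := by
    rw [zero_add]
    exact mem_degLT_succ.2 ⟨c, hc, h⟩
  obtain ⟨z, hz, hdz⟩ := mem_degLT_succ.1
    (O.mem_degLT_of_lead_mul_mem (n := 0) hP hP0 (by simp) hd hPd)
  refine ⟨z, hz, O.lead_unique hc (mul_mem hP hz) h ?_⟩
  rw [mul_assoc, ← mul_sub]
  exact coeff_mul_mem_degLT hP hdz

theorem quadratic_eigen (O : IsOreExtension A x σ) {f e : R} {μ m n : K}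
    (hf : f ∈ A) (he : e ∈ A) (hf0 : f ≠ 0) (hσf : σ f = m • f) (hσe : σ e = n • e)
    (h : x * (f * x + e) = μ • ((f * x + e) * x)) :
    x * f - σ f * x = (m - n) • e ∧ x * e = σ e * x := by
  obtain ⟨h₂, h₁, h₀⟩ := O.quadratic_unique (a := σ f) (b := x * f - σ f * x + σ e)
    (c := x * e - σ e * x) (a' := μ • f) (b' := μ • e) (c' := 0)
    ((O.map_mem_iff f).2 hf) (add_mem (O.comm_mem f hf) ((O.map_mem_iff e).2 he))
    (O.comm_mem e he) (A.smul_mem hf μ) (A.smul_mem he μ) (zero_mem A) (by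
      calc σ f * x ^ 2 + ((x * f - σ f * x + σ e) * x + (x * e - σ e * x))
          = x * (f * x + e) := by noncomm_ring
        _ = μ • f * x ^ 2 + (μ • e * x + 0) := by
          rw [h, add_mul, mul_assoc, ← sq, smul_add, add_zero, smul_mul_assoc, smul_mul_assoc])
  obtain rfl : m = μ := smul_left_injective K hf0 (hσf.symm.trans h₂)
  refine ⟨?_, sub_eq_zero.1 h₀⟩
  rw [sub_smul, ← hσe, ← h₁, add_sub_cancel_right]

variable [NoZeroDivisors R]

theorem exists_lead_mul_lead_eq_mul {B : Subalgebra K R} (O : IsOreExtension A x σ)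
    (hB : ∀ w, w ∈ B ↔ ∃ n, w ∈ degLT A x n) (hP : P ∈ A) (hP0 : P ≠ 0) (hnorm : IsNormalIn B P)
    {a b a' b' d α β : R} {m : ℕ} (ha : a ∈ B) (hb : b ∈ B) (ha' : a' ∈ B) (hb' : b' ∈ B)
    (hd : d ∈ B) (hα : α ∈ A) (hβ : β ∈ A) (hlα : a - P * a' - α * x ^ n ∈ degLT A x n)
    (hlβ : b - P * b' - β * x ^ m ∈ degLT A x m) (e : a * b = P * d) :
    ∃ z ∈ A, α * (σ ^ n) β = P * z := by
  have hPB : P ∈ B := (hB P).2 ⟨1, mem_degLT_one.2 hP⟩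
  obtain ⟨c, hc, ec⟩ := hnorm.1 (a - P * a') (sub_mem ha (mul_mem hPB ha'))
  have hprod : (a - P * a') * (b - P * b') = P * (d - a' * b - c * b') := by
    rw [mul_sub, ← mul_assoc _ P, ec, sub_mul, e]
    noncomm_ring
  obtain ⟨k, hk⟩ := (hB _).1 (sub_mem (sub_mem hd (mul_mem ha' hb)) (mul_mem hc hb'))
  exact O.exists_lead_eq_mul hP hP0 (mul_mem hα ((O.pow_apply_mem_iff n β).2 hβ)) hk
    (hprod ▸ O.mul_sub_lead_mem_degLT hα hβ hlα hlβ)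

-- If `a b ∈ P B`, reduce `a` and `b` modulo `P B` until their leading coefficients are not in
-- `P A`: the product of these coefficients then contradicts the primeness of `P` in `A`.
theorem isPrimeIn_adjoin_insert {T : Set R} (O : IsOreExtension (Algebra.adjoin K T) x σ)
    {s : K} (hs : s ≠ 0) (hσ : σ P = s • P) (hx : x * P = s • (P * x))
    (hP : IsPrimeIn K (Algebra.adjoin K T) P) :
    IsPrimeIn K (Algebra.adjoin K (insert x T)) P := by
  have hB (w : R) := O.mem_adjoin_insert_iff (w := w)
  obtain ⟨hPA, hP0, hunit, hl, hr, hprime⟩ := hP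
  have hnorm : IsNormalIn (Algebra.adjoin K (insert x T)) P :=
    isNormalIn_adjoin_insert hs hx ⟨hl, fun b hb => (hr b hb).imp fun _ h => ⟨h.1, h.2.symm⟩⟩
  refine ⟨Algebra.adjoin_mono (Set.subset_insert x T) hPA, hP0, ?_, hnorm.1,
    fun b hb => (hnorm.2 b hb).imp fun _ h => ⟨h.1, h.2.symm⟩, ?_⟩
  · rintro ⟨u, hu, hPu, huP⟩
    obtain ⟨n, hn⟩ := (hB u).1 hu
    refine hunit ⟨u, mem_degLT_one.1
      (O.mem_degLT_of_lead_mul_mem (w := P) (n := 0) (m := 1) hPA hP0 (by simp) hn ?_), hPu, huP⟩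
    rw [hPu]
    exact mem_degLT_one.2 (one_mem _)
  · rintro a ha b hb ⟨d, hd, e⟩
    obtain ⟨p, hap⟩ := (hB a).1 ha
    obtain ⟨q, hbq⟩ := (hB b).1 hb
    rcases exists_mul_or_lead_not_dvd (P := P) hap with
      ⟨a', ha', rfl⟩ | ⟨n, a', ha', α, hα, hnα, hlα⟩
    · exact Or.inl ⟨a', (hB a').2 ⟨p, ha'⟩, rfl⟩
    rcases exists_mul_or_lead_not_dvd (P := P) hbq with
      ⟨b', hb', rfl⟩ | ⟨m, b', hb', β, hβ, hnβ, hlβ⟩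
    · exact Or.inr ⟨b', (hB b').2 ⟨q, hb'⟩, rfl⟩
    rcases hprime α hα _ ((O.pow_apply_mem_iff n β).2 hβ) (O.exists_lead_mul_lead_eq_mul hB hPA hP0
      hnorm ha hb ((hB a').2 ⟨p, ha'⟩) ((hB b').2 ⟨q, hb'⟩) hd hα hβ hlα hlβ e) with h | ⟨w, hw, ew⟩
    · exact absurd h hnα
    · exact absurd (O.toIsSkewStable.dvd_of_dvd_pow_apply hs hσ hw ew) hnβ

end IsOreExtension

end OreField

/-! ### Ordered monomials and interval subalgebras -/

section Monomial

variable {K : Type u} [Field K] {R : Type v} [Ring R] [Algebra K R] {N : ℕ} {x : Fin N → R}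
  {T T₁ T₂ : Set (Fin N → ℕ)} {a b : ℕ}

theorem prod_map_pow_mul_prod_map_pow (x : Fin N → R) {m₁ m₂ : Fin N → ℕ} (b : ℕ)
    (h₁ : ∀ t, m₁ t ≠ 0 → t ≤ b) (h₂ : ∀ t, m₂ t ≠ 0 → b ≤ t) {l : List (Fin N)}
    (hl : l.Pairwise (· < ·)) :
    (l.map fun k => x k ^ m₁ k).prod * (l.map fun k => x k ^ m₂ k).prod =
      (l.map fun k => x k ^ (m₁ + m₂) k).prod := by
  induction l with
  | nil => simp
  | cons k l ih =>
    rw [List.pairwise_cons] at hl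
    simp only [List.map_cons, List.prod_cons]
    rw [← ih hl.2, Pi.add_apply]
    rcases lt_or_ge (k : ℕ) b with hk | hk
    · have hm₂ : m₂ k = 0 := not_not.1 fun h => (h₂ k h).not_gt hk
      rw [hm₂, pow_zero, one_mul, add_zero, mul_assoc]
    · have htail : (l.map fun k => x k ^ m₁ k).prod = 1 := by
        refine List.prod_eq_one fun y hy => ?_
        obtain ⟨t, ht, rfl⟩ := List.mem_map.1 hy
        have hkt : (k : ℕ) < t := hl.1 t ht
        have hm₁ : m₁ t = 0 := not_not.1 fun h => (h₁ t h).not_gt (hk.trans_lt hkt)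
        rw [hm₁, pow_zero]
      rw [htail, mul_one, one_mul, ← mul_assoc, ← pow_add]

theorem ordMonomial_mul (x : Fin N → R) {m₁ m₂ : Fin N → ℕ} (b : ℕ)
    (h₁ : ∀ t, m₁ t ≠ 0 → t ≤ b) (h₂ : ∀ t, m₂ t ≠ 0 → b ≤ t) :
    ordMonomial x m₁ * ordMonomial x m₂ = ordMonomial x (m₁ + m₂) :=
  prod_map_pow_mul_prod_map_pow x b h₁ h₂ (List.pairwise_lt_finRange N)

theorem ordMonomial_single (x : Fin N → R) (l : Fin N) (n : ℕ) :
    ordMonomial x (Pi.single l n) = x l ^ n := by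
  rw [ordMonomial, List.prod_map_eq_pow_single l,
    List.count_eq_one_of_mem (List.nodup_finRange N) (List.mem_finRange l)]
  · simp
  · intro t ht _
    simp [Pi.single_eq_of_ne ht]

theorem ordMonomial_zero (x : Fin N → R) : ordMonomial x 0 = 1 :=
  List.prod_eq_one (by simp)

variable (K) in
/-- The span of the ordered monomials whose exponent vectors lie in `T`. -/
def monomialSpan (x : Fin N → R) (T : Set (Fin N → ℕ)) : Submodule K R :=
  Submodule.span K (Set.image (ordMonomial x) T)

/-- The exponent vectors supported on the indices `t` with `a ≤ t < b`. -/
def exponentsIn (N a b : ℕ) : Set (Fin N → ℕ) :=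
  {m | ∀ t, m t ≠ 0 → a ≤ t ∧ t < b}

theorem exponentsIn_inter : exponentsIn N 0 b ∩ exponentsIn N a N = exponentsIn N a b := by
  ext m
  exact ⟨fun h t ht => ⟨(h.2 t ht).1, (h.1 t ht).2⟩,
    fun h => ⟨fun t ht => ⟨t.1.zero_le, (h t ht).2⟩, fun t ht => ⟨(h t ht).1, t.2⟩⟩⟩

theorem single_mem_exponentsIn {l : Fin N} (ha : a ≤ l) (hb : l < b) (n : ℕ) :
    Pi.single l n ∈ exponentsIn N a b := by
  intro t ht
  obtain rfl : t = l := by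
    by_contra h
    exact ht (Pi.single_eq_of_ne h _)
  exact ⟨ha, hb⟩

theorem add_mem_exponentsIn {m₁ m₂ : Fin N → ℕ} (h₁ : m₁ ∈ exponentsIn N a b)
    (h₂ : m₂ ∈ exponentsIn N a b) : m₁ + m₂ ∈ exponentsIn N a b := by
  intro t ht
  by_cases h : m₁ t = 0
  · exact h₂ t (by simpa [h] using ht)
  · exact h₁ t h

theorem exponentsIn_mono {a' b' : ℕ} (ha : a' ≤ a) (hb : b ≤ b') :
    exponentsIn N a b ⊆ exponentsIn N a' b' :=
  fun _ hm t ht => ⟨ha.trans (hm t ht).1, (hm t ht).2.trans_le hb⟩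

theorem apply_eq_zero_of_mem_exponentsIn {m : Fin N → ℕ} (hm : m ∈ exponentsIn N a b) {l : Fin N}
    (hl : l < a ∨ b ≤ l) : m l = 0 := by
  by_contra h
  have := hm l h
  omega

theorem monomialSpan_mono (x : Fin N → R) (h : T₁ ⊆ T₂) :
    monomialSpan K x T₁ ≤ monomialSpan K x T₂ :=
  Submodule.span_mono (Set.image_mono h)

theorem ordMonomial_mem_monomialSpan {m : Fin N → ℕ} (h : m ∈ T) :
    ordMonomial x m ∈ monomialSpan K x T :=
  Submodule.subset_span ⟨m, h, rfl⟩

theorem pow_mem_monomialSpan (x : Fin N → R) (l : Fin N) (n : ℕ) :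
    x l ^ n ∈ monomialSpan K x {Pi.single l n} :=
  ordMonomial_single x l n ▸ ordMonomial_mem_monomialSpan rfl

theorem mul_mem_monomialSpan (b : ℕ) (h₁ : ∀ m ∈ T₁, ∀ t, m t ≠ 0 → t ≤ b)
    (h₂ : ∀ m ∈ T₂, ∀ t, m t ≠ 0 → b ≤ t) (h : ∀ m₁ ∈ T₁, ∀ m₂ ∈ T₂, m₁ + m₂ ∈ T) {v w : R}
    (hv : v ∈ monomialSpan K x T₁) (hw : w ∈ monomialSpan K x T₂) :
    v * w ∈ monomialSpan K x T := by
  have hle : monomialSpan K x T₁ * monomialSpan K x T₂ ≤ monomialSpan K x T := by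
    rw [monomialSpan, monomialSpan, Submodule.span_mul_span, Submodule.span_le]
    rintro _ ⟨_, ⟨m₁, hm₁, rfl⟩, _, ⟨m₂, hm₂, rfl⟩, rfl⟩
    beta_reduce
    rw [ordMonomial_mul x b (h₁ m₁ hm₁) (h₂ m₂ hm₂)]
    exact ordMonomial_mem_monomialSpan (h m₁ hm₁ m₂ hm₂)
  exact hle (Submodule.mul_mem_mul hv hw)

theorem mem_monomialSpan_inter (hx : LinearIndependent K (ordMonomial (R := R) x)) {w : R}
    (h₁ : w ∈ monomialSpan K x T₁) (h₂ : w ∈ monomialSpan K x T₂) :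
    w ∈ monomialSpan K x (T₁ ∩ T₂) := by
  rw [monomialSpan, Finsupp.mem_span_image_iff_linearCombination] at *
  obtain ⟨f, hf, rfl⟩ := h₁
  obtain ⟨g, hg, e⟩ := h₂
  obtain rfl : g = f := hx e
  exact ⟨g, Finsupp.supported_inter (M := K) (R := K) T₁ T₂ ▸ ⟨hf, hg⟩, rfl⟩

theorem eq_zero_of_mem_monomialSpan_disjoint (hx : LinearIndependent K (ordMonomial (R := R) x))
    (hT : Disjoint T₁ T₂) {w : R} (h₁ : w ∈ monomialSpan K x T₁)
    (h₂ : w ∈ monomialSpan K x T₂) : w = 0 :=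
  Submodule.disjoint_def.1 (hx.disjoint_span_image hT) w h₁ h₂

theorem eq_zero_of_mul_pow_eq_zero (hx : LinearIndependent K (ordMonomial (R := R) x)) {l : Fin N}
    {n : ℕ} {w : R} (hw : w ∈ monomialSpan K x (exponentsIn N 0 l)) (h : w * x l ^ n = 0) :
    w = 0 := by
  obtain ⟨f, hf, rfl⟩ := (Finsupp.mem_span_image_iff_linearCombination K).1 hw
  have hmul : ∀ m ∈ f.support,
      f m • ordMonomial x m * x l ^ n = f m • ordMonomial x (m + Pi.single l n) := by
    intro m hm
    rw [smul_mul_assoc, ← ordMonomial_single, ordMonomial_mul x l fun t ht => (hf hm t ht).2.le]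
    exact fun t ht => (single_mem_exponentsIn le_rfl (Nat.lt_succ_self l) n t ht).1
  have hshift : LinearIndependent K fun m : Fin N → ℕ => ordMonomial x (m + Pi.single l n) :=
    hx.comp _ fun _ _ h => add_right_cancel h
  obtain rfl : f = 0 := by
    refine linearIndependent_iff.1 hshift f ?_
    rw [← h, Finsupp.linearCombination_apply, Finsupp.linearCombination_apply, Finsupp.sum_mul]
    exact Finset.sum_congr rfl fun m hm => (hmul m hm).symm
  exact map_zero _

theorem mul_pow_mem_monomialSpan {l : Fin N} {w : R}
    (hw : w ∈ monomialSpan K x (exponentsIn N a l)) (ha : a ≤ l) (n : ℕ) :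
    w * x l ^ n ∈ monomialSpan K x {m | m ∈ exponentsIn N a (l + 1) ∧ m l = n} := by
  refine mul_mem_monomialSpan l (fun m hm t ht => (hm t ht).2.le) ?_ ?_ hw
    (pow_mem_monomialSpan x l n)
  · rintro _ rfl t ht
    exact (single_mem_exponentsIn le_rfl (Nat.lt_succ_self l) n t ht).1
  · rintro m hm _ rfl
    exact ⟨add_mem_exponentsIn (exponentsIn_mono le_rfl (Nat.le_succ l) hm)
      (single_mem_exponentsIn ha (Nat.lt_succ_self l) n),
      by simp [apply_eq_zero_of_mem_exponentsIn hm (Or.inr le_rfl)]⟩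

theorem degLT_le_monomialSpan {l : Fin N} {A : Subalgebra K R}
    (hA : ∀ w ∈ A, w ∈ monomialSpan K x (exponentsIn N 0 l)) (n : ℕ) :
    degLT A (x l) n ≤ monomialSpan K x {m | m ∈ exponentsIn N 0 (l + 1) ∧ m l < n} := by
  induction n with
  | zero => exact bot_le
  | succ n ih =>
    refine sup_le (ih.trans (monomialSpan_mono x ?_)) ?_
    · exact fun m hm => ⟨hm.1, hm.2.trans n.lt_succ_self⟩
    · rintro _ ⟨w, hw, rfl⟩
      refine monomialSpan_mono x ?_ (mul_pow_mem_monomialSpan (hA w hw) l.1.zero_le n)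
      exact fun m hm => ⟨hm.1, hm.2.trans_lt n.lt_succ_self⟩

end Monomial

namespace QNA

variable {K : Type u} [Field K] {R : Type v} [Ring R] [Algebra K R] {N r : ℕ}
  (Q : QNA K R N r) {a b : ℕ}

/-- The subalgebra generated by the `x t` with `a ≤ t < b`. -/
def interval (a b : ℕ) : Subalgebra K R :=
  Algebra.adjoin K (Q.x '' {t : Fin N | a ≤ t ∧ t < b})

theorem Rsub_eq_interval (b : ℕ) : Rsub K Q.x b = Q.interval 0 b := by
  simp only [Rsub, interval, zero_le, true_and]

theorem RsubRev_eq_interval (b : ℕ) : RsubRev K Q.x b = Q.interval (b + 1) N := by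
  simp only [RsubRev, interval, Nat.succ_le_iff, Fin.is_lt, and_true]

variable {Q} in
theorem interval_le {a' b' : ℕ} (h : ∀ t : Fin N, a ≤ t → t < b → a' ≤ t ∧ t < b') :
    Q.interval a b ≤ Q.interval a' b' :=
  Algebra.adjoin_mono (Set.image_mono fun t ht => h t ht.1 ht.2)

variable {Q} in
theorem gen_mem_interval {t : Fin N} (ha : a ≤ t) (hb : t < b) : Q.x t ∈ Q.interval a b :=
  Algebra.subset_adjoin ⟨t, ⟨ha, hb⟩, rfl⟩

theorem interval_eq_top : Q.interval 0 N = ⊤ := by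
  simp only [interval, zero_le, Fin.is_lt, and_self, Set.ofPred_true, Set.image_univ, Q.gen]

theorem interval_eq_bot (h : b ≤ a) : Q.interval a b = ⊥ := by
  have : {t : Fin N | a ≤ t ∧ t < b} = ∅ := by
    ext t
    simp only [Set.mem_ofPred_eq, Set.mem_empty_iff_false, iff_false]
    omega
  rw [interval, this, Set.image_empty, Algebra.adjoin_empty]

theorem interval_succ {l : Fin N} (h : a ≤ l) : Q.interval a (l + 1) =
    Algebra.adjoin K (insert (Q.x l) (Q.x '' {t : Fin N | a ≤ t ∧ t < (l : ℕ)})) := by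
  rw [interval, ← Set.image_insert_eq]
  congr 2
  ext t
  simp only [Set.mem_ofPred_eq, Set.mem_insert_iff, Fin.ext_iff]
  omega

theorem interval_eq_adjoin_insert {i : Fin N} (h : i < b) : Q.interval i b =
    Algebra.adjoin K (insert (Q.x i) (Q.x '' {t : Fin N | i + 1 ≤ (t : ℕ) ∧ t < b})) := by
  rw [interval, ← Set.image_insert_eq]
  congr 2
  ext t
  simp only [Set.mem_ofPred_eq, Set.mem_insert_iff, Fin.ext_iff]
  omega

theorem monomialSpan_le_interval :
    monomialSpan K Q.x (exponentsIn N a b) ≤ Subalgebra.toSubmodule (Q.interval a b) := by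
  rw [monomialSpan, Submodule.span_le]
  rintro _ ⟨m, hm, rfl⟩
  refine Subalgebra.list_prod_mem _ fun y hy => ?_
  obtain ⟨t, _, rfl⟩ := List.mem_map.1 hy
  by_cases h : m t = 0
  · simp only [h, pow_zero, one_mem]
  · exact pow_mem (gen_mem_interval (hm t h).1 (hm t h).2) _

theorem exists_act_gen (ξ : Torus K r) (t : Fin N) :
    ∃ s : K, s ≠ 0 ∧ Q.act ξ (Q.x t) = s • Q.x t := by
  obtain ⟨f, hf⟩ := Q.eigenvec t
  exact ⟨_, Units.ne_zero _, hf ξ⟩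

theorem act_mem_interval (ξ : Torus K r) {w : R} (hw : w ∈ Q.interval a b) :
    Q.act ξ w ∈ Q.interval a b := by
  have hle : Q.interval a b ≤ (Q.interval a b).comap (Q.act ξ : R →ₐ[K] R) := by
    refine Algebra.adjoin_le ?_
    rintro _ ⟨t, ht, rfl⟩
    obtain ⟨s, _, hs⟩ := Q.exists_act_gen ξ t
    exact (hs ▸ Subalgebra.smul_mem _ (gen_mem_interval ht.1 ht.2) s : Q.act ξ (Q.x t) ∈ _)
  exact hle hw

theorem act_mem_interval_iff (ξ : Torus K r) {w : R} :
    Q.act ξ w ∈ Q.interval a b ↔ w ∈ Q.interval a b := by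
  refine ⟨fun h => ?_, Q.act_mem_interval ξ⟩
  simpa using Q.act_mem_interval ξ⁻¹ h

theorem isSkewStable (l : Fin N) : IsSkewStable (Q.interval 0 l) (Q.x l) (Q.act (Q.h l)) where
  map_mem_iff _ := Q.act_mem_interval_iff _
  comm_mem := Q.Rsub_eq_interval l ▸ Q.stable l

theorem interval_zero_le_monomialSpan (b : ℕ) :
    Subalgebra.toSubmodule (Q.interval 0 b) ≤ monomialSpan K Q.x (exponentsIn N 0 b) := by
  induction b with
  | zero =>
    rw [Q.interval_eq_bot le_rfl, Algebra.toSubmodule_bot, Submodule.one_le, ← ordMonomial_zero Q.x]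
    exact ordMonomial_mem_monomialSpan fun t ht => absurd rfl ht
  | succ b ih =>
    intro w hw
    by_cases hb : b < N
    · rw [Subalgebra.mem_toSubmodule, Q.interval_succ (l := ⟨b, hb⟩) b.zero_le] at hw
      obtain ⟨n, hn⟩ := (Q.isSkewStable ⟨b, hb⟩).mem_adjoin_insert_iff.1 hw
      exact monomialSpan_mono _ (Set.sep_subset _ _)
        (degLT_le_monomialSpan (l := ⟨b, hb⟩) (fun _ h => ih h) n hn)
    · exact monomialSpan_mono _ (exponentsIn_mono le_rfl b.le_succ)
        (ih (interval_le (fun t _ _ => by omega) hw))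

theorem isOreExtension (l : Fin N) :
    IsOreExtension (Q.interval 0 l) (Q.x l) (Q.act (Q.h l)) where
  toIsSkewStable := Q.isSkewStable l
  eq_zero_of_mul_pow_mem n w hw h := by
    have hw' := Q.interval_zero_le_monomialSpan l hw
    refine eq_zero_of_mul_pow_eq_zero Q.pbw hw'
      (eq_zero_of_mem_monomialSpan_disjoint Q.pbw ?_ (mul_pow_mem_monomialSpan hw' l.1.zero_le n)
        (degLT_le_monomialSpan (Q.interval_zero_le_monomialSpan l) n h))
    exact Set.disjoint_left.2 fun m h h' => h'.2.ne h.2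

theorem mem_interval_zero_succ_iff (l : Fin N) (w : R) :
    w ∈ Q.interval 0 (l + 1) ↔ ∃ n, w ∈ degLT (Q.interval 0 l) (Q.x l) n := by
  rw [Q.interval_succ l.1.zero_le]
  exact (Q.isOreExtension l).mem_adjoin_insert_iff

include Q in
theorem nontrivial : Nontrivial R :=
  ⟨⟨ordMonomial Q.x 0, 0, Q.pbw.ne_zero 0⟩⟩

theorem gen_ne_zero (t : Fin N) : Q.x t ≠ 0 := by
  have := Q.pbw.ne_zero (Pi.single t 1)
  rwa [ordMonomial_single, pow_one] at this

theorem eq_zero_or_eq_zero_of_mem_interval (hb : b ≤ N) {v w : R} (hv : v ∈ Q.interval 0 b)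
    (hw : w ∈ Q.interval 0 b) (h : v * w = 0) : v = 0 ∨ w = 0 := by
  have := Q.nontrivial
  induction b generalizing v w with
  | zero =>
    rw [Q.interval_eq_bot le_rfl] at hv hw
    obtain ⟨s, rfl⟩ := Algebra.mem_bot.1 hv
    obtain ⟨t, rfl⟩ := Algebra.mem_bot.1 hw
    rwa [← map_mul, map_eq_zero, mul_eq_zero, ← map_eq_zero (algebraMap K R),
      ← map_eq_zero (algebraMap K R)] at h
  | succ b ih =>
    let l : Fin N := ⟨b, hb⟩
    obtain ⟨n, hn⟩ := (Q.mem_interval_zero_succ_iff l v).1 hv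
    obtain ⟨m, hm⟩ := (Q.mem_interval_zero_succ_iff l w).1 hw
    exact (Q.isOreExtension l).mul_eq_zero_imp (fun v hv w hw => ih (by omega) hv hw) hn hm h

include Q in
theorem noZeroDivisors : NoZeroDivisors R where
  eq_zero_or_eq_zero_of_mul_eq_zero :=
    Q.eq_zero_or_eq_zero_of_mem_interval le_rfl (Q.interval_eq_top ▸ Algebra.mem_top)
      (Q.interval_eq_top ▸ Algebra.mem_top)

/-- The eigenvalue of `x t` under the torus element `ξ`. -/
def eigval (ξ : Torus K r) (t : Fin N) : K := (Q.exists_act_gen ξ t).choose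

theorem eigval_ne_zero (ξ : Torus K r) (t : Fin N) : Q.eigval ξ t ≠ 0 :=
  (Q.exists_act_gen ξ t).choose_spec.1

theorem act_gen (ξ : Torus K r) (t : Fin N) : Q.act ξ (Q.x t) = Q.eigval ξ t • Q.x t :=
  (Q.exists_act_gen ξ t).choose_spec.2

theorem eigval_h (l : Fin N) : Q.eigval (Q.h l) l = Q.lam l :=
  smul_left_injective K (Q.gen_ne_zero l) (by beta_reduce; rw [← Q.act_gen, Q.hx])

theorem lam_ne_one (l : Fin N) : Q.lam l ≠ 1 := by simpa using Q.lam_not_root l 1 one_ne_zero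

theorem gen_notMem_interval_of_le {i : Fin N} (h : b ≤ i) : Q.x i ∉ Q.interval a b := by
  intro hx
  have := Q.nontrivial
  have hx' : Q.x i ∈ Q.interval 0 i :=
    interval_le (fun t _ h => ⟨t.1.zero_le, by omega⟩) hx
  exact one_ne_zero ((Q.isOreExtension i).eq_zero_of_mul_pow_mem 1 1 (one_mem _)
    (mem_degLT_one.2 (by simpa using hx')))

end QNA

namespace SymQNA

variable {K : Type u} [Field K] {R : Type v} [Ring R] [Algebra K R] {N r : ℕ}
  (S : SymQNA K R N r) {a b : ℕ}

theorem ordMonomial_comp_rev (x : Fin N → R) (m : Fin N → ℕ) :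
    ordMonomial (fun t => x t.rev) m = revOrdMonomial x fun t => m t.rev := by
  rw [ordMonomial, revOrdMonomial, List.finRange_reverse, List.map_map]
  simp only [Function.comp_def, Fin.rev_rev]

theorem Rsub_comp_rev (x : Fin N → R) (k : Fin N) :
    Rsub K (fun t => x t.rev) k = RsubRev K x k.rev := by
  rw [Rsub, RsubRev]
  congr 1
  ext w
  constructor <;> rintro ⟨t, ht, rfl⟩ <;> refine ⟨t.rev, ?_, ?_⟩ <;>
    simp only [Set.mem_ofPred_eq, Fin.val_rev, Fin.rev_rev] at * <;> omega

/-- The quantum nilpotent algebra given by the reversed presentation, with generators numbered in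
the reversed order. -/
def rev : QNA K R N r where
  x t := S.x t.rev
  act := S.act
  h t := S.hstar t.rev
  lam t := S.lamstar t.rev
  rational := S.rational
  gen := by rw [← S.gen]; exact congrArg _ (Fin.rev_surjective.range_comp S.x)
  pbw := by
    have h : ordMonomial (fun t => S.x t.rev) = revOrdMonomial S.x ∘ fun m => m ∘ Fin.rev :=
      funext (ordMonomial_comp_rev S.x)
    rw [h]
    exact S.pbwRev.comp _ Fin.rev_surjective.injective_comp_right
  eigenvec k := S.eigenvec k.rev
  stable k a ha := by
    have h := Rsub_comp_rev (K := K) S.x k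
    rw [h] at ha ⊢
    exact S.stableRev k.rev a ha
  locnil k a ha := by
    have h := Rsub_comp_rev (K := K) S.x k
    rw [h] at ha
    exact S.locnilRev k.rev a ha
  hx k := S.hxstar k.rev
  lam_not_root k := S.lamstar_not_root k.rev

theorem isOreExtension_rev (i : Fin N) :
    IsOreExtension (S.interval (i + 1) N) (S.x i) (S.act (S.hstar i)) := by
  have h : S.rev.interval 0 i.rev = S.interval (i + 1) N := by
    rw [← QNA.Rsub_eq_interval, ← QNA.RsubRev_eq_interval, ← Fin.rev_rev i, Fin.rev_rev i.rev]
    exact Rsub_comp_rev S.x i.rev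
  have hore := S.rev.isOreExtension i.rev
  rw [h] at hore
  simpa only [rev, Fin.rev_rev] using hore

theorem interval_le_monomialSpan_of_le (a : ℕ) :
    Subalgebra.toSubmodule (S.interval a N) ≤ monomialSpan K S.x (exponentsIn N a N) := by
  obtain ⟨n, hn⟩ : ∃ n, N ≤ n + a := ⟨N, by omega⟩
  induction n generalizing a with
  | zero =>
    rw [S.interval_eq_bot (by omega), Algebra.toSubmodule_bot, Submodule.one_le,
      ← ordMonomial_zero S.x]
    exact ordMonomial_mem_monomialSpan fun t ht => absurd rfl ht
  | succ n ih =>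
    intro w hw
    by_cases ha : a < N
    · let i : Fin N := ⟨a, ha⟩
      rw [Subalgebra.mem_toSubmodule, S.interval_eq_adjoin_insert (i := i) ha] at hw
      obtain ⟨q, hq⟩ := (S.isOreExtension_rev i).mem_adjoin_insert_iff.1 hw
      refine (S.isOreExtension_rev i).degLT_induction_right _ (fun q v hv => ?_) q hq
      refine mul_mem_monomialSpan a ?_ (fun m hm t ht => ?_) ?_ (pow_mem_monomialSpan S.x i q)
        (ih (a + 1) (by omega) hv)
      · rintro _ rfl t ht
        exact Nat.lt_succ_iff.1 (single_mem_exponentsIn le_rfl a.lt_succ_self q t ht).2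
      · exact (Nat.le_succ a).trans (hm t ht).1
      · rintro _ rfl m hm
        exact add_mem_exponentsIn (single_mem_exponentsIn le_rfl ha q)
          (exponentsIn_mono a.le_succ le_rfl hm)
    · exact monomialSpan_mono _ (exponentsIn_mono a.le_succ le_rfl)
        (ih (a + 1) (by omega) (QNA.interval_le (fun t _ _ => by omega) hw))

theorem mem_interval_iff_mem_monomialSpan {w : R} :
    w ∈ S.interval a b ↔ w ∈ monomialSpan K S.x (exponentsIn N a b) := by
  refine ⟨fun hw => ?_, fun hw => S.monomialSpan_le_interval hw⟩
  rw [← exponentsIn_inter]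
  exact mem_monomialSpan_inter S.pbw
    (S.interval_zero_le_monomialSpan b (QNA.interval_le (fun t _ h => ⟨t.1.zero_le, h⟩) hw))
    (S.interval_le_monomialSpan_of_le a (QNA.interval_le (fun t h _ => ⟨h, t.2⟩) hw))

theorem mem_interval_of_mem_of_mem {w : R} (h₁ : w ∈ S.interval 0 b) (h₂ : w ∈ S.interval a N) :
    w ∈ S.interval a b := by
  rw [mem_interval_iff_mem_monomialSpan] at *
  exact exponentsIn_inter (N := N) ▸ mem_monomialSpan_inter S.pbw h₁ h₂

theorem isOreExtension_forward {l : Fin N} (h : a ≤ l) :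
    IsOreExtension (S.interval a l) (S.x l) (S.act (S.h l)) := by
  have hle : S.interval a l ≤ S.interval 0 l :=
    QNA.interval_le fun t _ h => ⟨t.1.zero_le, h⟩
  refine (S.isOreExtension l).of_le hle ⟨fun w => S.act_mem_interval_iff _, fun w hw => ?_⟩
  have hx : S.x l ∈ S.interval a N := QNA.gen_mem_interval h l.2
  have hw' : w ∈ S.interval a N := QNA.interval_le (fun t h _ => ⟨h, t.2⟩) hw
  exact S.mem_interval_of_mem_of_mem ((S.isOreExtension l).comm_mem w (hle hw))
    (sub_mem (mul_mem hx hw') (mul_mem (S.act_mem_interval _ hw') hx))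

theorem isOreExtension_backward {i : Fin N} (h : i < b) :
    IsOreExtension (S.interval (i + 1) b) (S.x i) (S.act (S.hstar i)) := by
  have hle : S.interval (i + 1) b ≤ S.interval (i + 1) N :=
    QNA.interval_le fun t h _ => ⟨h, t.2⟩
  refine (S.isOreExtension_rev i).of_le hle ⟨fun w => S.act_mem_interval_iff _, fun w hw => ?_⟩
  have hx : S.x i ∈ S.interval 0 b := QNA.gen_mem_interval i.1.zero_le h
  have hw' : w ∈ S.interval 0 b := QNA.interval_le (fun t _ h => ⟨t.1.zero_le, h⟩) hw
  exact S.mem_interval_of_mem_of_mem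
    (sub_mem (mul_mem hx hw') (mul_mem (S.act_mem_interval _ hw') hx))
    ((S.isOreExtension_rev i).comm_mem w (hle hw))

theorem mem_interval_succ_iff {l : Fin N} (h : a ≤ l) (w : R) :
    w ∈ S.interval a (l + 1) ↔ ∃ n, w ∈ degLT (S.interval a l) (S.x l) n := by
  rw [S.interval_succ h]
  exact (S.isOreExtension_forward h).mem_adjoin_insert_iff

theorem mem_interval_iff {i : Fin N} (h : i < b) (w : R) :
    w ∈ S.interval i b ↔ ∃ n, w ∈ degLT (S.interval (i + 1) b) (S.x i) n := by
  rw [S.interval_eq_adjoin_insert h]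
  exact (S.isOreExtension_backward h).mem_adjoin_insert_iff

theorem eigval_hstar (l : Fin N) : S.eigval (S.hstar l) l = S.lamstar l :=
  smul_left_injective K (S.gen_ne_zero l) (by beta_reduce; rw [← S.act_gen, S.hxstar])

theorem lamstar_ne_zero (l : Fin N) : S.lamstar l ≠ 0 := S.eigval_hstar l ▸ S.eigval_ne_zero _ l

theorem gen_notMem_interval_of_lt {i : Fin N} (h : i < a) : S.x i ∉ S.interval a b := by
  intro hx
  have := S.nontrivial
  have hx_tail : S.x i ∈ S.interval (i + 1) N :=
    QNA.interval_le (fun t h _ => ⟨by omega, t.2⟩) hx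
  exact one_ne_zero ((S.isOreExtension_backward i.2).eq_zero_of_mul_pow_mem 1 1 (one_mem _)
    (mem_degLT_one.2 (by simpa using hx_tail)))

/-- The defect `x j * x i - χ * (x i * x j)` of `q`-commutation, which for `i < j` is
`δ_j (x i)`. -/
def defect (j i : Fin N) : R := S.x j * S.x i - S.eigval (S.h j) i • (S.x i * S.x j)

theorem gen_mul_gen (j i : Fin N) :
    S.x j * S.x i = S.eigval (S.h j) i • (S.x i * S.x j) + S.defect j i :=
  (add_sub_cancel _ _).symm

theorem eigval_mul_eigval_and_defect_mem {i j : Fin N} (hij : i < j) :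
    S.eigval (S.hstar i) j * S.eigval (S.h j) i = 1 ∧ S.defect j i ∈ S.interval (i + 1) j := by
  have hij' : (i : ℕ) < j := hij
  have OF := S.isOreExtension_forward hij'.le
  have hxi : S.x i ∈ S.interval i j := QNA.gen_mem_interval le_rfl hij'
  have hdef : S.defect j i ∈ S.interval i j := by
    have h := OF.comm_mem _ hxi
    rwa [S.act_gen, smul_mul_assoc] at h
  have hback := (S.isOreExtension_backward (b := j + 1) (by omega)).comm_mem (S.x j)
    (QNA.gen_mem_interval hij' (Nat.lt_succ_self j))
  set p := S.eigval (S.hstar i) j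
  set q := S.eigval (S.h j) i
  have hlin : S.x i * S.x j - S.act (S.hstar i) (S.x j) * S.x i =
      ((1 - p * q) • S.x i) * S.x j + -(p • S.defect j i) := by
    rw [S.act_gen, defect]
    simp only [smul_sub, sub_smul, one_smul, smul_mul_assoc, sub_mul, mul_smul]
    abel
  obtain ⟨n, hn⟩ := (S.mem_interval_succ_iff hij' _).1 (hlin ▸ hback)
  obtain ⟨h₁, h₂⟩ := OF.mem_of_mul_gen_add_mem
    (QNA.interval_le fun t h₁ h₂ => ⟨by omega, h₂⟩)
    (Subalgebra.smul_mem _ hxi _) (neg_mem (Subalgebra.smul_mem _ hdef _)) hn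
  constructor
  · by_contra hne
    rw [← Subalgebra.mem_toSubmodule, Submodule.smul_mem_iff _ (sub_ne_zero.2 (Ne.symm hne))] at h₁
    exact S.gen_notMem_interval_of_lt (Nat.lt_succ_self i) h₁
  · rw [neg_mem_iff] at h₂
    exact ((S.interval (i + 1) j).toSubmodule.smul_mem_iff (S.eigval_ne_zero _ _)).1 h₂

end SymQNA

/-! ### Homogeneous prime elements -/

section LevelSets

variable {N : ℕ}

/-- `p` is the predecessor of `l` in its level set of `η`. -/
def IsPred (η : Fin N → ℤ) (p l : Fin N) : Prop :=
  p < l ∧ η p = η l ∧ ∀ t, p < t → t < l → η t ≠ η l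

theorem predIdx_cases (η : Fin N → ℤ) (l : Fin N) :
    (predIdx η l = ⊥ ∧ ∀ t < l, η t ≠ η l) ∨ ∃ p : Fin N, predIdx η l = p ∧ IsPred η p l := by
  rcases h : predIdx η l with _ | p
  · refine Or.inl ⟨rfl, fun t ht he => ?_⟩
    have ht : t ∈ Finset.univ.filter fun k => k < l ∧ η k = η l := by simp [ht, he]
    rw [Finset.max_eq_bot.1 h] at ht
    exact Finset.notMem_empty t ht
  · have hp := Finset.mem_of_max h
    simp only [Finset.mem_filter, Finset.mem_univ, true_and] at hp
    refine Or.inr ⟨p, rfl, hp.1, hp.2, fun t hpt htl he => hpt.not_ge ?_⟩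
    exact Finset.le_max_of_eq (by simp [htl, he]) h

end LevelSets

namespace QNA

variable {K : Type u} [Field K] {R : Type v} [Ring R] [Algebra K R] {N r : ℕ}
  {Q : QNA K R N r} {a b : R}

variable (Q) in
/-- `a` is a common eigenvector of the torus, or zero; unlike in `IsEigenWith`, the eigenvalues
need not come from a character. -/
def IsHomogeneous (a : R) : Prop := ∀ ξ, ∃ s : K, Q.act ξ a = s • a

theorem IsHomogeneous.exists_ne_zero (ha : Q.IsHomogeneous a) (ha0 : a ≠ 0) (ξ : Torus K r) :
    ∃ s : K, s ≠ 0 ∧ Q.act ξ a = s • a := by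
  obtain ⟨s, hs⟩ := ha ξ
  refine ⟨s, ?_, hs⟩
  rintro rfl
  rw [zero_smul, map_eq_zero_iff _ (Q.act ξ).injective] at hs
  exact ha0 hs

theorem IsHomogeneous.smul (ha : Q.IsHomogeneous a) (u : K) : Q.IsHomogeneous (u • a) := fun ξ => by
  obtain ⟨s, hs⟩ := ha ξ
  exact ⟨s, by rw [map_smul, hs, smul_comm]⟩

theorem isHomogeneous_one : Q.IsHomogeneous 1 := fun ξ => ⟨1, by rw [map_one, one_smul]⟩

end QNA

namespace IsPrimeSeq

variable {K : Type u} [Field K] {R : Type v} [Ring R] [Algebra K R] {N r : ℕ}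
  {Q : QNA K R N r} {η : Fin N → ℤ} {c y : Fin N → R}

theorem isPrimeIn (hseq : IsPrimeSeq K Q η c y) {l : Fin N} {e : ℕ} (hle : l < e) (he : e ≤ N)
    (hη : ∀ t : Fin N, l < t → t < e → η t ≠ η l) : IsPrimeIn K (Q.interval 0 e) (y l) := by
  obtain ⟨k, rfl⟩ : ∃ k, e = k + 1 := ⟨e - 1, by omega⟩
  rw [← Q.Rsub_eq_interval]
  refine ((hseq.prime_iff ⟨k, he⟩ (y l)).2 ⟨l, Fin.le_def.2 (by simp only; omega), ?_, 1, ?_⟩).1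
  · exact fun t hlt htk => hη t hlt (Nat.lt_succ_iff.2 htk)
  · rw [Units.val_one, one_smul]

theorem isPrimeIn_succ (hseq : IsPrimeSeq K Q η c y) (l : Fin N) :
    IsPrimeIn K (Q.interval 0 (l + 1)) (y l) :=
  hseq.isPrimeIn (Nat.lt_succ_self l) l.2 fun t h h' => by omega

theorem mem_interval (hseq : IsPrimeSeq K Q η c y) (l : Fin N) : y l ∈ Q.interval 0 (l + 1) :=
  (hseq.isPrimeIn_succ l).1

theorem ne_zero (hseq : IsPrimeSeq K Q η c y) (l : Fin N) : y l ≠ 0 := (hseq.isPrimeIn_succ l).2.1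

theorem isHomogeneous (hseq : IsPrimeSeq K Q η c y) (l : Fin N) : Q.IsHomogeneous (y l) := fun ξ =>
  (hseq.homog l).elim fun _ hf => ⟨_, hf ξ⟩

theorem mem_interval_of_lt (hseq : IsPrimeSeq K Q η c y) {p l : Fin N} (h : p < l) :
    y p ∈ Q.interval 0 l :=
  QNA.interval_le (fun t h₁ h₂ => ⟨h₁, by omega⟩) (hseq.mem_interval p)

theorem notMem_interval (hseq : IsPrimeSeq K Q η c y) (l : Fin N) : y l ∉ Q.interval 0 l := by
  intro hy
  by_cases hδ : deltaZero K Q l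
  · exact Q.gen_notMem_interval_of_le le_rfl (hseq.rec_delta_zero l hδ ▸ hy)
  · have hyl := hseq.rec_delta_ne l hδ
    have hlead_eq_zero : ∀ f ∈ Q.interval 0 l, y l = f * Q.x l - c l → f = 0 := by
      intro f hf e
      have hc : c l ∈ Q.interval 0 l := Q.Rsub_eq_interval l ▸ hseq.c_mem l hδ
      refine (Q.isOreExtension l).eq_zero_of_mul_pow_mem 1 f hf (mem_degLT_one.2 ?_)
      rw [pow_one, ← sub_add_cancel (f * Q.x l) (c l), ← e]
      exact add_mem hy hc
    rcases predIdx_cases η l with ⟨h, _⟩ | ⟨p, h, hp⟩ <;> rw [h] at hyl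
    · have := Q.nontrivial
      exact one_ne_zero (hlead_eq_zero 1 (one_mem _) hyl)
    · exact hseq.ne_zero p (hlead_eq_zero _ (hseq.mem_interval_of_lt hp.1) hyl)

-- If `δ_l = 0` then `y_p` stays prime after adjoining `x_l`, but the prime element theorem lists
-- it among the homogeneous primes only as long as `p` has no successor.
theorem not_deltaZero (hseq : IsPrimeSeq K Q η c y) {p l : Fin N} (hp : IsPred η p l) :
    ¬ deltaZero K Q l := by
  intro hδ
  have := Q.noZeroDivisors
  obtain ⟨hpl, he, hη⟩ := hp
  have hprime := hseq.isPrimeIn hpl l.2.le fun t h h' => he ▸ hη t h h'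
  obtain ⟨s, hs0, hs⟩ := (hseq.isHomogeneous p).exists_ne_zero (hseq.ne_zero p) (Q.h l)
  have hx : Q.x l * y p = s • (y p * Q.x l) := by
    rw [sub_eq_zero.1 (hδ (y p) ((Q.Rsub_eq_interval l).symm ▸ hprime.1)), hs, smul_mul_assoc]
  have hprime' : IsPrimeIn K (Rsub K Q.x (l + 1)) (y p) := by
    rw [Q.Rsub_eq_interval, Q.interval_succ l.1.zero_le]
    exact (Q.isOreExtension l).isPrimeIn_adjoin_insert hs0 hs hx hprime
  obtain ⟨k, _, hk, t, ht⟩ := (hseq.prime_iff l (y p)).1 ⟨hprime', hseq.homog p⟩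
  rcases lt_trichotomy k p with h | rfl | h
  · exact hseq.notMem_interval p (ht ▸ Subalgebra.smul_mem _ (hseq.mem_interval_of_lt h) _)
  · exact hk l hpl le_rfl he.symm
  · refine hseq.notMem_interval k ?_
    rw [← inv_smul_smul t (y k), Units.smul_def t, ← ht]
    exact Subalgebra.smul_mem _ (hseq.mem_interval_of_lt h) _

theorem exists_eq_linear (hseq : IsPrimeSeq K Q η c y) (l : Fin N) :
    ∃ f, ((∃ p, IsPred η p l ∧ f = y p) ∨ ((∀ t < l, η t ≠ η l) ∧ f = 1)) ∧
      ∃ g ∈ Q.interval 0 l, y l = f * Q.x l + g := by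
  have hpred := predIdx_cases η l
  by_cases hδ : deltaZero K Q l
  · have hno : ∀ t < l, η t ≠ η l := by
      rcases hpred with ⟨_, h⟩ | ⟨p, _, hp⟩
      · exact h
      · exact absurd hδ (hseq.not_deltaZero hp)
    exact ⟨1, Or.inr ⟨hno, rfl⟩, 0, zero_mem _, by rw [hseq.rec_delta_zero l hδ, one_mul, add_zero]⟩
  · have hyl := hseq.rec_delta_ne l hδ
    have hc : c l ∈ Q.interval 0 l := Q.Rsub_eq_interval l ▸ hseq.c_mem l hδ
    rw [sub_eq_add_neg] at hyl
    rcases hpred with ⟨h, hno⟩ | ⟨p, h, hp⟩ <;> rw [h] at hyl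
    · exact ⟨1, Or.inr ⟨hno, rfl⟩, _, neg_mem hc, hyl⟩
    · exact ⟨y p, Or.inl ⟨p, hp, rfl⟩, _, neg_mem hc, hyl⟩

end IsPrimeSeq

/-! ### Peeling off generators -/

namespace SymQNA

variable {K : Type u} [Field K] {R : Type v} [Ring R] [Algebra K R] {N r : ℕ}
  {S : SymQNA K R N r} {i l : Fin N} {f g b Y : R}

section Degree

theorem eigen_eq_of_lead (hil : i < l) {n : ℕ} {s k : K} (hf : f ∈ S.interval (i + 1) l)
    (hf0 : f ≠ 0) (hb : b ∈ S.interval (i + 1) l)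
    (hlead : Y - f * S.x i ^ n ∈ degLT (S.interval (i + 1) (l + 1)) (S.x i) n)
    (hY : S.x l * Y = Y * (s • S.x l + b)) (hk : S.act (S.h l) Y = k • Y) : k = s := by
  have hil' : (i : ℕ) < l := hil
  have OF := S.isOreExtension_forward (a := i + 1) (l := l) hil'
  have OB := S.isOreExtension_backward (i := i) (b := l + 1) (by omega)
  have OB' := S.isOreExtension_backward (i := i) (b := l) hil'
  have hle : S.interval (i + 1) l ≤ S.interval (i + 1) (l + 1) :=
    QNA.interval_le fun t h₁ h₂ => ⟨h₁, by omega⟩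
  have hxl : S.x l ∈ S.interval (i + 1) (l + 1) := QNA.gen_mem_interval hil' (Nat.lt_succ_self l)
  set p := S.eigval (S.hstar i) l
  set q := S.eigval (S.h l) i
  have hpq : p * q = 1 := (S.eigval_mul_eigval_and_defect_mem hil).1
  have hmul := OB.lead_of_mul_eq_mul hxl (add_mem (Subalgebra.smul_mem _ hxl s) (hle hb)) (hle hf)
    hlead hY
  have hσf : S.act (S.h l) f = (s * p ^ n) • f := by
    refine (OF.linear_unique (b := S.x l * f - S.act (S.h l) f * S.x l)
      (b' := f * (S.act (S.hstar i) ^ n) b) ((OF.map_mem_iff f).2 hf) (OF.comm_mem f hf)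
      (Subalgebra.smul_mem _ hf _) (mul_mem hf ((OB'.pow_apply_mem_iff n b).2 hb)) ?_).1
    rw [add_sub_cancel, hmul, map_add, map_smul, pow_apply_eq_smul (S.act_gen _ _), smul_smul,
      mul_add, mul_smul_comm, smul_mul_assoc]
  have hqσf := OB.lead_eigen (S.act_gen (S.h l) i) (fun _ => S.act_mem_interval _) (hle hf) hlead hk
  refine (smul_left_injective K hf0 (hqσf.symm.trans ?_))
  rw [hσf, smul_smul, mul_left_comm, ← mul_pow, mul_comm q, hpq, one_pow, mul_one]

-- Otherwise the `x_i`-leading term of `f x_l + g` comes from `g`; comparing eigenvalues of `h_l` on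
-- the two leading terms, with respect to `x_l` and to `x_i`, then gives `λ_l = 1`.
theorem mem_degLT_of_lead_mem_degLT (hil : i < l) {D : ℕ} (hf : f ∈ S.interval i l) (hf0 : f ≠ 0)
    (hfh : S.IsHomogeneous f) (hg : g ∈ S.interval i l) (hYh : S.IsHomogeneous (f * S.x l + g))
    (hY : IsNormalIn (S.interval i (l + 1)) (f * S.x l + g))
    (hD : f ∈ degLT (S.interval (i + 1) l) (S.x i) (D + 1)) :
    f * S.x l + g ∈ degLT (S.interval (i + 1) (l + 1)) (S.x i) (D + 1) := by
  have hil' : (i : ℕ) < l := hil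
  have := S.noZeroDivisors
  have OF := S.isOreExtension_forward (a := i) (l := l) hil'.le
  have OB := S.isOreExtension_backward (i := i) (b := l + 1) (by omega)
  have hle : S.interval (i + 1) l ≤ S.interval (i + 1) (l + 1) :=
    QNA.interval_le fun t h₁ h₂ => ⟨h₁, by omega⟩
  have hxl : S.x l ∈ S.interval (i + 1) (l + 1) := QNA.gen_mem_interval hil' (Nat.lt_succ_self l)
  obtain ⟨b, hb, hxY⟩ := hY.1 (S.x l) (QNA.gen_mem_interval hil'.le (Nat.lt_succ_self l))
  by_contra hcon
  obtain ⟨m, hm⟩ := (S.mem_interval_iff (i := i) (b := l + 1) (by omega) _).1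
    ((S.mem_interval_succ_iff hil'.le _).2 ⟨2, mem_degLT_two.2 ⟨f, hf, g, hg, rfl⟩⟩)
  obtain ⟨n, hDn, F, hF, hF0, hlead⟩ := exists_lead_of_notMem_degLT hm hcon
  have hF' : F ∈ S.interval (i + 1) l := by
    obtain ⟨q, hq⟩ := (S.mem_interval_iff hil' g).1 hg
    have hfx := degLT_mono hDn
      (OB.mul_mem_degLT (m := 0) (degLT_le_of_le hle _ _ hD) (mem_degLT_one.2 hxl))
    exact OB.lead_mem_of_le hle hq hF (by convert sub_mem hlead hfx using 1; noncomm_ring)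
  obtain ⟨s, hs0, hs⟩ := hfh.exists_ne_zero hf0 (S.h l)
  obtain ⟨q, hq⟩ := (S.mem_interval_succ_iff hil'.le b).1 hb
  obtain ⟨b₀, hb₀, rfl⟩ := OF.gen_mul_linear_eq hf hf0 hg hs hq hxY
  have hb₀' : b₀ ∈ S.interval (i + 1) l := by
    obtain ⟨q, hq⟩ := (S.mem_interval_iff (i := i) (by omega) _).1 hb
    have hB := mem_degLT_one.1 (OB.mem_degLT_of_lead_mul_mem (m := 1) hF hF0 hlead hq
      (hxY ▸ coeff_mul_mem_degLT hxl (mem_degLT_succ.2 ⟨F, hF, hlead⟩)))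
    rw [add_mem_cancel_left (Subalgebra.smul_mem _ hxl s)] at hB
    exact S.mem_interval_of_mem_of_mem (QNA.interval_le (fun t _ h => ⟨t.1.zero_le, h⟩) hb₀)
      (QNA.interval_le (fun t h _ => ⟨h, t.2⟩) hB)
  obtain ⟨k, hk⟩ := hYh (S.h l)
  obtain rfl := eigen_eq_of_lead hil hF' hF0 hb₀' hlead hxY hk
  have hfk := (OF.coeff_eigen (S.hx l) hf hg (S.act_mem_interval _ hf) (S.act_mem_interval _ hg)
    hk).1
  rw [hs, smul_smul] at hfk
  exact S.lam_ne_one l (mul_right_cancel₀ hs0 ((smul_left_injective K hf0 hfk).trans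
    (one_mul k).symm))

end Degree

variable {η : Fin N → ℤ} {Y : Fin N → R}

variable (K) in
/-- The shape of the leading coefficient of the element attached to `l` once `x 0, …, x (i - 1)`
have been peeled off: up to a nonzero scalar it is the element attached to the predecessor of `l`,
or `1` if that predecessor does not exist or has been peeled off. -/
def IsPeeledLead (η : Fin N → ℤ) (i : ℕ) (Y : Fin N → R) (l : Fin N) (f : R) : Prop :=
  ∃ u : K, u ≠ 0 ∧ ((∃ p : Fin N, i ≤ p ∧ IsPred η p l ∧ f = u • Y p) ∨
    ((∀ t : Fin N, i ≤ t → t < l → η t ≠ η l) ∧ f = u • 1))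

variable (S) in
/-- `Y` is the sequence of homogeneous normal elements of the interval subalgebras starting at `x i`
obtained from the homogeneous prime elements by peeling off `x 0, …, x (i - 1)` from the left. -/
structure IsPeeled (η : Fin N → ℤ) (i : ℕ) (Y : Fin N → R) : Prop where
  mem : ∀ l : Fin N, i ≤ l → Y l ∈ S.interval i (l + 1)
  ne_zero : ∀ l : Fin N, i ≤ l → Y l ≠ 0
  isHomogeneous : ∀ l : Fin N, i ≤ l → S.IsHomogeneous (Y l)
  exists_lead : ∀ l : Fin N, i ≤ l → ∃ f, IsPeeledLead K η i Y l f ∧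
    ∃ g ∈ S.interval i l, Y l = f * S.x l + g
  isNormalIn : ∀ l : Fin N, i ≤ l → ∀ e : ℕ, l < e → e ≤ N →
    (∀ t : Fin N, l < t → t < e → η t ≠ η l) → IsNormalIn (S.interval i e) (Y l)

theorem isPeeled_zero {c y : Fin N → R} (hseq : IsPrimeSeq K S.toQNA η c y) :
    S.IsPeeled η 0 y where
  mem l _ := hseq.mem_interval l
  ne_zero l _ := hseq.ne_zero l
  isHomogeneous l _ := hseq.isHomogeneous l
  exists_lead l _ := by
    obtain ⟨f, hf, hg⟩ := hseq.exists_eq_linear l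
    refine ⟨f, ⟨1, one_ne_zero, ?_⟩, hg⟩
    simpa only [zero_le, true_and, forall_const, one_smul] using hf
  isNormalIn l _ e hle he hη := by
    obtain ⟨-, -, -, hl, hr, -⟩ := hseq.isPrimeIn hle he hη
    exact ⟨hl, fun b hb => (hr b hb).imp fun _ ha => ⟨ha.1, ha.2.symm⟩⟩

namespace IsPeeled

theorem isNormalIn_succ {i : ℕ} (hY : S.IsPeeled η i Y) (hil : i ≤ l) :
    IsNormalIn (S.interval i (l + 1)) (Y l) :=
  hY.isNormalIn l hil _ (Nat.lt_succ_self l) l.2 fun t h h' => by omega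

theorem mem_of_lt {i b : ℕ} (hY : S.IsPeeled η i Y) (hil : i ≤ l) (hlb : l < b) :
    Y l ∈ S.interval i b :=
  QNA.interval_le (fun t h₁ h₂ => ⟨h₁, by omega⟩) (hY.mem l hil)

theorem lead_mem {i : ℕ} (hY : S.IsPeeled η i Y) (hf : IsPeeledLead K η i Y l f) :
    f ∈ S.interval i l := by
  obtain ⟨u, -, ⟨p, hip, hp, rfl⟩ | ⟨-, rfl⟩⟩ := hf
  · exact Subalgebra.smul_mem _ (hY.mem_of_lt hip hp.1) u
  · exact Subalgebra.smul_mem _ (one_mem _) u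

theorem lead_ne_zero {i : ℕ} (hY : S.IsPeeled η i Y) (hf : IsPeeledLead K η i Y l f) : f ≠ 0 := by
  have := S.nontrivial
  obtain ⟨u, hu, ⟨p, hip, -, rfl⟩ | ⟨-, rfl⟩⟩ := hf
  · exact smul_ne_zero hu (hY.ne_zero p hip)
  · exact smul_ne_zero hu one_ne_zero

theorem lead_isHomogeneous {i : ℕ} (hY : S.IsPeeled η i Y) (hf : IsPeeledLead K η i Y l f) :
    S.IsHomogeneous f := by
  obtain ⟨u, -, ⟨p, hip, -, rfl⟩ | ⟨-, rfl⟩⟩ := hf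
  · exact (hY.isHomogeneous p hip).smul u
  · exact QNA.isHomogeneous_one.smul u

theorem exists_eq_smul_gen (hY : S.IsPeeled η i Y) : ∃ u : K, u ≠ 0 ∧ Y i = u • S.x i := by
  obtain ⟨f, ⟨u, hu, hf⟩, g, hg, hYi⟩ := hY.exists_lead i le_rfl
  obtain rfl : f = u • 1 := by
    rcases hf with ⟨p, hip, hp, -⟩ | ⟨-, hf⟩
    · exact absurd hp.1 hip.not_gt
    · exact hf
  rw [hYi, smul_mul_assoc, one_mul]
  rw [S.interval_eq_bot le_rfl] at hg
  obtain ⟨c, rfl⟩ := Algebra.mem_bot.1 hg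
  obtain ⟨k, hk⟩ := hY.isHomogeneous i le_rfl (S.h i)
  have O := S.isOreExtension_forward (l := i) le_rfl
  have hu1 : u • (1 : R) ∈ S.interval i i := Subalgebra.smul_mem _ (one_mem _) u
  obtain ⟨h₁, h₂⟩ := O.coeff_eigen (S.hx i) hu1 (algebraMap_mem _ c)
    (S.act_mem_interval _ hu1) (S.act_mem_interval _ (algebraMap_mem _ c)) (hYi ▸ hk)
  have := S.nontrivial
  rw [map_smul, map_one] at h₁
  obtain rfl : S.lam i = k := smul_left_injective K (smul_ne_zero hu one_ne_zero) h₁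
  by_cases hc : algebraMap K R c = 0
  · exact ⟨u, hu, by rw [hc, add_zero]⟩
  · rw [AlgEquiv.commutes] at h₂
    exact absurd (smul_left_injective K hc (h₂.symm.trans (one_smul K _).symm)) (S.lam_ne_one i)

end IsPeeled

end SymQNA

namespace SymQNA.IsPeeled

variable {K : Type u} [Field K] {R : Type v} [Ring R] [Algebra K R] {N r : ℕ}
  {S : SymQNA K R N r} {η : Fin N → ℤ} {Y : Fin N → R} {i l : Fin N}

theorem mem_degLT_of_lead (hY : S.IsPeeled η i Y) (hil : i < l) {D : ℕ} {f g : R}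
    (hf : IsPeeledLead K η i Y l f) (hg : g ∈ S.interval i l) (hYl : Y l = f * S.x l + g)
    (hD : f ∈ degLT (S.interval (i + 1) l) (S.x i) (D + 1)) :
    Y l ∈ degLT (S.interval (i + 1) (l + 1)) (S.x i) (D + 1) :=
  hYl ▸ mem_degLT_of_lead_mem_degLT hil (hY.lead_mem hf) (hY.lead_ne_zero hf)
    (hY.lead_isHomogeneous hf) hg (hYl ▸ hY.isHomogeneous l hil.le)
    (hYl ▸ hY.isNormalIn_succ (Fin.le_def.1 hil.le)) hD

theorem mem_of_ne (hY : S.IsPeeled η i Y) (hil : i ≤ l) (hη : η l ≠ η i) :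
    Y l ∈ S.interval (i + 1) (l + 1) := by
  induction l using WellFoundedLT.induction with
  | ind l ih =>
    obtain ⟨f, hf, g, hg, hYl⟩ := hY.exists_lead l hil
    have hf' : f ∈ S.interval (i + 1) l := by
      obtain ⟨u, -, ⟨p, hip, ⟨hpl, hp, -⟩, rfl⟩ | ⟨-, rfl⟩⟩ := hf
      · exact Subalgebra.smul_mem _ (QNA.interval_le (fun t h₁ h₂ => ⟨h₁, by omega⟩)
          (ih p hpl hip (hp ▸ hη))) u
      · exact Subalgebra.smul_mem _ (one_mem _) u
    have hil' : i < l := lt_of_le_of_ne hil (by rintro rfl; exact hη rfl)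
    exact mem_degLT_one.1 (hY.mem_degLT_of_lead hil' hf hg hYl (mem_degLT_one.2 hf'))

theorem exists_eq_linear (hY : S.IsPeeled η i Y) (hil : i ≤ l) (hη : η l = η i) :
    ∃ f ∈ S.interval (i + 1) (l + 1), f ≠ 0 ∧
      ∃ e ∈ S.interval (i + 1) (l + 1), Y l = f * S.x i + e := by
  have := S.nontrivial
  induction l using WellFoundedLT.induction with
  | ind l ih =>
    rcases eq_or_lt_of_le hil with rfl | hil'
    · obtain ⟨u, hu, hYi⟩ := hY.exists_eq_smul_gen
      exact ⟨u • 1, Subalgebra.smul_mem _ (one_mem _) u, smul_ne_zero hu one_ne_zero, 0,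
        zero_mem _, by rw [hYi, smul_mul_assoc, one_mul, add_zero]⟩
    obtain ⟨f, hf, g, hg, hYl⟩ := hY.exists_lead l hil
    obtain ⟨F, hF, hF0, E, hE, hfF⟩ : ∃ F ∈ S.interval (i + 1) l, F ≠ 0 ∧
        ∃ E ∈ S.interval (i + 1) l, f = F * S.x i + E := by
      obtain ⟨u, hu, ⟨p, hip, ⟨hpl, hp, -⟩, rfl⟩ | ⟨hno, -⟩⟩ := hf
      · obtain ⟨F, hF, hF0, E, hE, hYp⟩ := ih p hpl hip (hp.trans hη)
        have hle : S.interval (i + 1) (p + 1) ≤ S.interval (i + 1) l :=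
          QNA.interval_le fun t h₁ h₂ => ⟨h₁, by omega⟩
        exact ⟨u • F, Subalgebra.smul_mem _ (hle hF) u, smul_ne_zero hu hF0, u • E,
          Subalgebra.smul_mem _ (hle hE) u, by rw [hYp, smul_add, smul_mul_assoc]⟩
      · exact absurd hη.symm (hno i le_rfl hil')
    obtain ⟨F', hF', E', hE', hYl'⟩ := mem_degLT_two.1
      (hY.mem_degLT_of_lead hil' hf hg hYl (mem_degLT_two.2 ⟨F, hF, E, hE, hfF⟩))
    refine ⟨F', hF', ?_, E', hE', hYl'⟩
    rintro rfl
    rw [zero_mul, zero_add] at hYl'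
    obtain ⟨n, hn⟩ := (S.mem_interval_succ_iff (a := i + 1) hil' _).1 (hYl' ▸ hE')
    have hf' := ((S.isOreExtension_forward (Fin.le_def.1 hil)).mem_of_mul_gen_add_mem
      (QNA.interval_le fun t h₁ h₂ => ⟨by omega, h₂⟩) (hY.lead_mem hf) hg (hYl ▸ hn)).1
    exact hF0 ((S.isOreExtension_backward (Fin.lt_def.1 hil')).linear_unique hF hE (zero_mem _) hf'
      (by rw [← hfF, zero_mul, zero_add])).1

theorem isHomogeneous_of_eq_linear (hY : S.IsPeeled η i Y) (hil : i ≤ l) {f e : R}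
    (hf : f ∈ S.interval (i + 1) (l + 1)) (he : e ∈ S.interval (i + 1) (l + 1))
    (hYl : Y l = f * S.x i + e) : S.IsHomogeneous f := by
  intro ξ
  obtain ⟨k, hk⟩ := hY.isHomogeneous l hil ξ
  have O := S.isOreExtension_backward (i := i) (b := l + 1) (Nat.lt_succ_of_le hil)
  have hcoeff := (O.coeff_eigen (S.act_gen ξ i) hf he (S.act_mem_interval ξ hf)
    (S.act_mem_interval ξ he) (hYl ▸ hk)).1
  exact ⟨(S.eigval ξ i)⁻¹ * k, by rw [mul_smul, ← hcoeff, inv_smul_smul₀ (S.eigval_ne_zero ξ i)]⟩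

end SymQNA.IsPeeled

namespace SymQNA

variable {K : Type u} [Field K] {R : Type v} [Ring R] [Algebra K R] {N r : ℕ}
  {S : SymQNA K R N r} {η : Fin N → ℤ} {Y Y' : Fin N → R} {i l : Fin N}

variable (S) in
/-- `Y'` arises from `Y` by peeling off `x i`: the elements attached to the level set of `i` are
linear in `x i` and get replaced by their leading coefficients, the others do not involve `x i`. -/
structure IsPeelStep (η : Fin N → ℤ) (i : Fin N) (Y Y' : Fin N → R) : Prop where
  mem : ∀ l, i ≤ l → Y' l ∈ S.interval (i + 1) (l + 1)
  ne_zero : ∀ l, i ≤ l → Y' l ≠ 0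
  eq_linear : ∀ l, i ≤ l → η l = η i → ∃ e ∈ S.interval (i + 1) (l + 1), Y l = Y' l * S.x i + e
  eq_of_ne : ∀ l, i ≤ l → η l ≠ η i → Y' l = Y l

theorem IsPeeled.exists_isPeelStep (hY : S.IsPeeled η i Y) : ∃ Y', S.IsPeelStep η i Y Y' := by
  have hstep (l : Fin N) : ∃ z, i ≤ l → z ∈ S.interval (i + 1) (l + 1) ∧ z ≠ 0 ∧
      (η l = η i → ∃ e ∈ S.interval (i + 1) (l + 1), Y l = z * S.x i + e) ∧
      (η l ≠ η i → z = Y l) := by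
    by_cases hη : η l = η i
    · by_cases hil : i ≤ l
      · obtain ⟨f, hf, hf0, he⟩ := hY.exists_eq_linear hil hη
        exact ⟨f, fun _ => ⟨hf, hf0, fun _ => he, fun h => absurd hη h⟩⟩
      · exact ⟨0, fun h => absurd h hil⟩
    · exact ⟨Y l, fun hil => ⟨hY.mem_of_ne hil hη, hY.ne_zero l hil, fun h => absurd h hη,
        fun _ => rfl⟩⟩
  choose Y' hY' using hstep
  exact ⟨Y', fun l h => (hY' l h).1, fun l h => (hY' l h).2.1, fun l h => (hY' l h).2.2.1,
    fun l h => (hY' l h).2.2.2⟩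

namespace IsPeelStep

theorem exists_eq_smul_one (hst : S.IsPeelStep η i Y Y') : ∃ u : K, u ≠ 0 ∧ Y' i = u • 1 := by
  have hmem := hst.mem i le_rfl
  rw [S.interval_eq_bot le_rfl] at hmem
  obtain ⟨u, hu⟩ := Algebra.mem_bot.1 hmem
  refine ⟨u, ?_, by rw [← hu, Algebra.algebraMap_eq_smul_one]⟩
  rintro rfl
  exact hst.ne_zero i le_rfl (by rw [← hu, map_zero])

theorem isHomogeneous (hst : S.IsPeelStep η i Y Y') (hY : S.IsPeeled η i Y) (hil : i ≤ l) :
    S.IsHomogeneous (Y' l) := by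
  by_cases hη : η l = η i
  · obtain ⟨e, he, hYl⟩ := hst.eq_linear l hil hη
    exact hY.isHomogeneous_of_eq_linear hil (hst.mem l hil) he hYl
  · exact hst.eq_of_ne l hil hη ▸ hY.isHomogeneous l hil

theorem exists_lead_of_eq (hst : S.IsPeelStep η i Y Y') (hY : S.IsPeeled η i Y) (hil : i < l)
    (hη : η l = η i) : ∃ f, IsPeeledLead K η (i + 1) Y' l f ∧
      ∃ g ∈ S.interval (i + 1) l, Y' l = f * S.x l + g := by
  have hil' : (i : ℕ) < l := hil
  obtain ⟨E, hE, hYl⟩ := hst.eq_linear l hil.le hη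
  obtain ⟨f, ⟨u, hu, ⟨p, hip, hp, rfl⟩ | ⟨hno, -⟩⟩, g, hg, hYl'⟩ := hY.exists_lead l hil.le
  swap
  · exact absurd hη.symm (hno i le_rfl hil)
  obtain ⟨e, he, hYp⟩ := hst.eq_linear p hip (hp.2.1.trans hη)
  have hle : S.interval (i + 1) l ≤ S.interval (i + 1) (l + 1) :=
    QNA.interval_le fun t h₁ h₂ => ⟨h₁, by omega⟩
  have hlep : S.interval (i + 1) (p + 1) ≤ S.interval (i + 1) l :=
    QNA.interval_le fun t h₁ h₂ => ⟨h₁, by have := hp.1; omega⟩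
  obtain ⟨n, hn⟩ := (S.mem_interval_iff hil' g).1 hg
  have O := S.isOreExtension_backward (i := i) (b := l + 1) (by omega)
  obtain ⟨c, hc, hYl''⟩ := O.coeff_mul_add hle (hst.mem l hil.le) hE
    (QNA.gen_mem_interval hil' (Nat.lt_succ_self l))
    (Subalgebra.smul_mem _ (hlep (hst.mem p hip)) u) (Subalgebra.smul_mem _ (hlep he) u) hn
    (by rw [← hYl, hYl', hYp, smul_add, smul_mul_assoc u (Y' p)])
  have hχ := S.eigval_ne_zero (S.hstar i) l
  refine ⟨(u * S.eigval (S.hstar i) l) • Y' p, ?_, c, hc, by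
    rw [hYl'', S.act_gen, smul_mul_smul_comm, smul_mul_assoc]⟩
  rcases eq_or_lt_of_le (Fin.le_def.2 hip) with rfl | hip'
  · obtain ⟨v, hv, hYi⟩ := hst.exists_eq_smul_one
    exact ⟨_, mul_ne_zero (mul_ne_zero hu hχ) hv, Or.inr ⟨hp.2.2, by rw [hYi, smul_smul]⟩⟩
  · exact ⟨_, mul_ne_zero hu hχ, Or.inl ⟨p, hip', hp, rfl⟩⟩

theorem exists_lead_of_ne (hst : S.IsPeelStep η i Y Y') (hY : S.IsPeeled η i Y) (hil : i < l)
    (hη : η l ≠ η i) : ∃ f, IsPeeledLead K η (i + 1) Y' l f ∧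
      ∃ g ∈ S.interval (i + 1) l, Y' l = f * S.x l + g := by
  obtain ⟨f, hf, g, hg, hYl⟩ := hY.exists_lead l hil.le
  rw [← hst.eq_of_ne l hil.le hη] at hYl
  refine ⟨f, ?_, g, ?_, hYl⟩
  · obtain ⟨u, hu, ⟨p, hip, hp, rfl⟩ | ⟨hno, rfl⟩⟩ := hf
    · have hpi : η p ≠ η i := hp.2.1 ▸ hη
      have hip' : i < p := lt_of_le_of_ne hip (by rintro rfl; exact hpi rfl)
      exact ⟨u, hu, Or.inl ⟨p, hip', hp, by rw [hst.eq_of_ne p hip hpi]⟩⟩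
    · exact ⟨u, hu, Or.inr ⟨fun t ht => hno t (Nat.le_of_succ_le ht), rfl⟩⟩
  · obtain ⟨n, hn⟩ := (S.mem_interval_succ_iff (a := i + 1) hil _).1 (hst.mem l hil.le)
    exact ((S.isOreExtension_forward (Fin.le_def.1 hil.le)).mem_of_mul_gen_add_mem
      (QNA.interval_le fun t h₁ h₂ => ⟨by omega, h₂⟩) (hY.lead_mem hf) hg (hYl ▸ hn)).2

theorem isNormalIn (hst : S.IsPeelStep η i Y Y') (hY : S.IsPeeled η i Y) (hil : i ≤ l) {e : ℕ}
    (hle : l < e) (he : e ≤ N) (hη : ∀ t : Fin N, l < t → t < e → η t ≠ η l) :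
    IsNormalIn (S.interval (i + 1) e) (Y' l) := by
  have := S.noZeroDivisors
  have hie : i < e := Nat.lt_of_le_of_lt hil hle
  have O := S.isOreExtension_backward hie
  have hsub : S.interval (i + 1) (l + 1) ≤ S.interval (i + 1) e :=
    QNA.interval_le fun t h₁ h₂ => ⟨h₁, by omega⟩
  have hmem := hsub (hst.mem l hil)
  have hnormal := hY.isNormalIn l hil e hle he hη
  by_cases hli : η l = η i
  · obtain ⟨E, hE, hYl⟩ := hst.eq_linear l hil hli
    exact O.isNormalIn_coeff (S.mem_interval_iff hie) hmem (hst.ne_zero l hil) (hsub hE)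
      (hYl ▸ hnormal)
  · exact O.isNormalIn_of_mem (S.mem_interval_iff hie) hmem (hst.ne_zero l hil)
      (hst.eq_of_ne l hil hli ▸ hnormal)

theorem isPeeled (hst : S.IsPeelStep η i Y Y') (hY : S.IsPeeled η i Y) :
    S.IsPeeled η (i + 1) Y' where
  mem l hil := hst.mem l (Nat.le_of_succ_le hil)
  ne_zero l hil := hst.ne_zero l (Nat.le_of_succ_le hil)
  isHomogeneous l hil := hst.isHomogeneous hY (Nat.le_of_succ_le hil)
  exists_lead l hil := by
    by_cases hη : η l = η i
    · exact hst.exists_lead_of_eq hY hil hη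
    · exact hst.exists_lead_of_ne hY hil hη
  isNormalIn l hil _ := hst.isNormalIn hY (Nat.le_of_succ_le hil)

end IsPeelStep

theorem exists_isPeeled {c y : Fin N → R} (hseq : IsPrimeSeq K S.toQNA η c y) {i : ℕ}
    (hi : i ≤ N) : ∃ Y, S.IsPeeled η i Y := by
  induction i with
  | zero => exact ⟨y, isPeeled_zero hseq⟩
  | succ i ih =>
    obtain ⟨Y, hY⟩ := ih (Nat.le_of_succ_le hi)
    obtain ⟨Y', hst⟩ := IsPeeled.exists_isPeelStep (i := ⟨i, hi⟩) hY
    exact ⟨Y', hst.isPeeled hY⟩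

-- Normality gives `x_i Y_l = Y_l b` for some `b`; the coefficients of `x_l` determine `σ_l b`.
theorem IsPeeled.exists_gen_mul_eq_smul (hY : S.IsPeeled η i Y) (hil : i ≤ l) :
    ∃ α : K, S.x i * Y l = α • (Y l * S.x i) := by
  have := S.noZeroDivisors
  induction l using WellFoundedLT.induction with
  | ind l ih =>
    rcases eq_or_lt_of_le hil with rfl | hil'
    · obtain ⟨u, -, hYi⟩ := hY.exists_eq_smul_gen
      exact ⟨1, by rw [hYi, mul_smul_comm, smul_mul_assoc, one_smul]⟩
    obtain ⟨f, hf, g, hg, hYl⟩ := hY.exists_lead l hil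
    obtain ⟨α, hα⟩ : ∃ α : K, S.x i * f = α • (f * S.x i) := by
      obtain ⟨u, -, ⟨p, hip, hp, rfl⟩ | ⟨-, rfl⟩⟩ := hf
      · obtain ⟨α, hα⟩ := ih p hp.1 hip
        exact ⟨α, by rw [mul_smul_comm, hα, smul_mul_assoc, smul_comm]⟩
      · exact ⟨1, by rw [mul_smul_comm, smul_mul_assoc, mul_one, one_mul, one_smul]⟩
    have O := S.isOreExtension_forward (Fin.le_def.1 hil)
    have hxi : S.x i ∈ S.interval i l := QNA.gen_mem_interval le_rfl hil'
    have hfmem := hY.lead_mem hf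
    have hf0 := hY.lead_ne_zero hf
    obtain ⟨b, hb, hxY⟩ := (hY.isNormalIn_succ hil).1 (S.x i)
      (QNA.gen_mem_interval le_rfl (Nat.lt_succ_of_le hil))
    obtain ⟨n, hn⟩ := (S.mem_interval_succ_iff (Fin.le_def.1 hil) b).1 hb
    rw [hYl] at hxY
    have hσb := (O.coeff_of_mul_eq_mul hxi (O.mem_of_mul_linear_eq hxi hn hfmem hf0 hg hxY) hfmem
      hg hxY).1
    rw [hα, ← mul_smul_comm] at hσb
    obtain rfl : (α * (S.eigval (S.h l) i)⁻¹) • S.x i = b := by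
      refine (S.act (S.h l)).injective (Eq.trans ?_ (mul_left_cancel₀ hf0 hσb))
      rw [map_smul, S.act_gen, smul_smul, inv_mul_cancel_right₀ (S.eigval_ne_zero _ i)]
    exact ⟨_, by rw [hYl, hxY, mul_smul_comm]⟩

end SymQNA

/-! ### Consecutive indices of a level set -/

section SkewDerivation

variable {K : Type u} [Field K] {R : Type v} [Ring R] [Algebra K R] {N r : ℕ}
  (act : Torus K r →* (R ≃ₐ[K] R)) (x : Fin N → R) (h : Fin N → Torus K r) (k : Fin N)

theorem skewDelta_mul (a b : R) : skewDelta K act x h k (a * b) =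
    skewDelta K act x h k a * b + act (h k) a * skewDelta K act x h k b := by
  rw [skewDelta, skewDelta, skewDelta, map_mul]
  noncomm_ring

theorem skewDelta_add (a b : R) : skewDelta K act x h k (a + b) =
    skewDelta K act x h k a + skewDelta K act x h k b := by
  rw [skewDelta, skewDelta, skewDelta, map_add]
  noncomm_ring

theorem skewDelta_smul (s : K) (a : R) :
    skewDelta K act x h k (s • a) = s • skewDelta K act x h k a := by
  rw [skewDelta, skewDelta, map_smul, mul_smul_comm, smul_mul_assoc, smul_sub]

variable {act x h k}

theorem mul_iterate_skewDelta {d e f : R} {m ℓ : K} (hm : m ≠ 0) (hf : act (h k) f = m • f)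
    (he : act (h k) e = (m * ℓ) • e) (hδf : skewDelta K act x h k f = (m * (1 - ℓ)) • e)
    (hδe : skewDelta K act x h k e = 0)
    (hδd : f * skewDelta K act x h k d = (ℓ ^ 2 - 1) • (e * d)) (n : ℕ) :
    f * (skewDelta K act x h k)^[n + 1] d =
      (ℓ ^ (n + 2) - 1) • (e * (skewDelta K act x h k)^[n] d) := by
  induction n with
  | zero => exact hδd
  | succ n ih =>
    have hδ := congrArg (skewDelta K act x h k) ih
    rw [skewDelta_mul, skewDelta_smul, skewDelta_mul, hδf, hδe, hf, he, zero_mul, zero_add,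
      ← Function.iterate_succ_apply' (skewDelta K act x h k) n,
      ← Function.iterate_succ_apply' (skewDelta K act x h k) (n + 1)] at hδ
    refine smul_right_injective R hm ?_
    simp only [smul_mul_assoc, smul_smul] at hδ ⊢
    rw [← eq_sub_iff_add_eq'] at hδ
    rw [hδ]
    module

end SkewDerivation

namespace SymQNA

variable {K : Type u} [Field K] {R : Type v} [Ring R] [Algebra K R] {N r : ℕ}
  (S : SymQNA K R N r) {i j : Fin N}

theorem act_defect (ξ : Torus K r) (j i : Fin N) :
    S.act ξ (S.defect j i) = (S.eigval ξ i * S.eigval ξ j) • S.defect j i := by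
  rw [defect, map_sub, map_smul, map_mul, map_mul, S.act_gen, S.act_gen, smul_mul_smul_comm,
    smul_mul_smul_comm, smul_sub, smul_comm, mul_comm (S.eigval ξ j)]

theorem skewDelta_gen (j i : Fin N) : skewDelta K S.act S.x S.h j (S.x i) = S.defect j i := by
  rw [skewDelta, S.act_gen, smul_mul_assoc, defect]

theorem defect_mem (hij : i < j) : S.defect j i ∈ S.interval (i + 1) j :=
  (S.eigval_mul_eigval_and_defect_mem hij).2

theorem gen_mul_gen_of_lt (hij : i < j) :
    S.x i * S.x j = S.eigval (S.hstar i) j • (S.x j * S.x i - S.defect j i) := by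
  rw [S.gen_mul_gen j, add_sub_cancel_right, smul_smul, (S.eigval_mul_eigval_and_defect_mem hij).1,
    one_smul]

theorem gen_mul_eq_of_defect_eq_zero {a : ℕ} (h : ∀ t : Fin N, a ≤ t → t < j → S.defect j t = 0)
    {w : R} (hw : w ∈ S.interval a j) : S.x j * w = S.act (S.h j) w * S.x j := by
  induction hw using Algebra.adjoin_induction with
  | mem w hw =>
    obtain ⟨t, ht, rfl⟩ := hw
    rw [S.act_gen, smul_mul_assoc, S.gen_mul_gen, h t ht.1 ht.2, add_zero]
  | algebraMap s => rw [AlgEquiv.commutes, Algebra.commutes]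
  | add v w _ _ hv hw => rw [mul_add, hv, hw, map_add, add_mul]
  | mul v w _ _ hv hw => rw [← mul_assoc, hv, mul_assoc, hw, map_mul, mul_assoc]

theorem exists_defect_ne_zero (hδ : ¬ deltaZero K S.toQNA j) : ∃ i < j, S.defect j i ≠ 0 ∧
    ∀ t, i < t → t < j → S.defect j t = 0 := by
  obtain ⟨t, ht⟩ : ∃ t, t < j ∧ S.defect j t ≠ 0 := by
    by_contra! h
    exact hδ fun a ha => sub_eq_zero.2
      (S.gen_mul_eq_of_defect_eq_zero (fun t _ => h t) (S.Rsub_eq_interval j ▸ ha))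
  obtain ⟨i, -, ⟨hij, hd⟩, hmax⟩ := Finite.exists_le_maximal
    (p := fun t => t < j ∧ S.defect j t ≠ 0) ht
  exact ⟨i, hij, hd, fun t hit htj => not_not.1 fun h0 => (hmax ⟨htj, h0⟩ hit.le).not_gt hit⟩

-- Both sides are the `x_j`-free part of `x_j x_i a` minus `χ x_i x_j a`.
theorem defect_mul (hij : i < j) (h : ∀ t, i < t → t < j → S.defect j t = 0) {a : R}
    (ha : a ∈ S.interval (i + 1) j) :
    S.defect j i * a = S.act (S.h j) (S.act (S.hstar i) a) * S.defect j i := by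
  have hij' : (i : ℕ) < j := hij
  have OF := S.isOreExtension_forward hij'.le
  have OB := S.isOreExtension_backward hij'
  have hle : S.interval (i + 1) j ≤ S.interval i j :=
    QNA.interval_le fun t h₁ h₂ => ⟨by omega, h₂⟩
  have hq (w) (hw : w ∈ S.interval (i + 1) j) : S.x j * w = S.act (S.h j) w * S.x j :=
    S.gen_mul_eq_of_defect_eq_zero (fun t => h t) hw
  have hd := hle (S.defect_mem hij)
  have hxi : S.x i ∈ S.interval i j := QNA.gen_mem_interval le_rfl hij'
  set q := S.eigval (S.h j) i
  set σ := S.act (S.h j)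
  set τ := S.act (S.hstar i)
  obtain ⟨D, hD, hxa⟩ : ∃ D ∈ S.interval (i + 1) j, S.x i * a = τ a * S.x i + D :=
    ⟨_, OB.comm_mem a ha, (add_sub_cancel _ _).symm⟩
  have hτa : τ a ∈ S.interval (i + 1) j := (OB.map_mem_iff a).2 ha
  have hmul : S.x j * (S.x i * a) =
      (q • (σ (τ a) * S.x i) + σ D) * S.x j + σ (τ a) * S.defect j i := by
    rw [hxa, mul_add, ← mul_assoc, hq _ hτa, hq _ hD, mul_assoc, S.gen_mul_gen]
    simp only [mul_add, add_mul, mul_smul_comm, smul_mul_assoc, mul_assoc]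
    abel
  have hmul' : S.x j * (S.x i * a) = q • (S.x i * σ a) * S.x j + S.defect j i * a := by
    rw [← mul_assoc, S.gen_mul_gen, add_mul, smul_mul_assoc, mul_assoc, hq a ha, ← mul_assoc,
      smul_mul_assoc]
  exact (OF.linear_unique (Subalgebra.smul_mem _ (mul_mem hxi ((OF.map_mem_iff _).2 (hle ha))) _)
    (mul_mem hd (hle ha))
    (add_mem (Subalgebra.smul_mem _ (mul_mem ((OF.map_mem_iff _).2 (hle hτa)) hxi) _)
      ((OF.map_mem_iff _).2 (hle hD)))
    (mul_mem ((OF.map_mem_iff _).2 (hle hτa)) hd) (hmul'.symm.trans hmul)).2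

theorem lam_mul_lamstar_of_defect (hij : i < j) (h : ∀ t, i < t → t < j → S.defect j t = 0)
    (hd : S.defect j i ≠ 0) : S.lam j * S.lamstar i = 1 := by
  have := S.noZeroDivisors
  obtain ⟨hpq, hmem⟩ := S.eigval_mul_eigval_and_defect_mem hij
  have hcomm := mul_right_cancel₀ hd (S.defect_mul hij h hmem)
  rw [S.act_defect, map_smul, S.act_defect, smul_smul, S.eigval_h, S.eigval_hstar] at hcomm
  have hone := smul_left_injective K hd ((one_smul K _).trans hcomm)
  linear_combination -hone - S.lamstar i * S.lam j * hpq

end SymQNA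

theorem exists_isPred_of_lt {N : ℕ} {η : Fin N → ℤ} {i k : Fin N} (hik : i < k) (hη : η i = η k) :
    ∃ l ≤ k, IsPred η i l := by
  obtain ⟨l, hlk, ⟨hil, hl⟩, hmin⟩ := Finite.exists_le_minimal
    (p := fun t => i < t ∧ η i = η t) ⟨hik, hη⟩
  exact ⟨l, hlk, hil, hl, fun t hit htl ht => (hmin ⟨hit, hl.trans ht.symm⟩ htl.le).not_gt htl⟩

namespace SymQNA

variable {K : Type u} [Field K] {R : Type v} [Ring R] [Algebra K R] {N r : ℕ}
  {S : SymQNA K R N r} {η : Fin N → ℤ} {Y : Fin N → R} {i j k : Fin N} {e f : R}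

namespace IsPeeled

theorem exists_isNormalIn_of_ne (hY : S.IsPeeled η i Y) (hij : i < j) (hη : η i ≠ η j) :
    ∃ l, i ≤ l ∧ l < j ∧ η l = η i ∧ IsNormalIn (S.interval i (j + 1)) (Y l) := by
  obtain ⟨l, hil, ⟨hlj, hl⟩, hmax⟩ := Finite.exists_le_maximal
    (p := fun t => t < j ∧ η t = η i) ⟨hij, rfl⟩
  refine ⟨l, hil, hlj, hl, hY.isNormalIn l hil (j + 1) (Nat.lt_succ_of_lt hlj) j.2 ?_⟩
  intro t hlt htj ht
  rcases lt_or_eq_of_le (Fin.le_def.2 (Nat.lt_succ_iff.1 htj)) with htj | rfl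
  · exact (hmax ⟨htj, ht.trans hl⟩ hlt.le).not_gt hlt
  · exact hη (ht.trans hl).symm

-- Otherwise `Y_l`, for the last `l < j` in the level set of `i`, is normal in an algebra containing
-- `x_j`, although `δ_j (Y_l)` is nonzero and free of `x_i`.
theorem eq_of_defect_ne_zero (hY : S.IsPeeled η i Y) (hij : i < j)
    (h : ∀ t, i < t → t < j → S.defect j t = 0) (hd : S.defect j i ≠ 0) : η i = η j := by
  have := S.noZeroDivisors
  have hij' : (i : ℕ) < j := hij
  by_contra hη
  obtain ⟨l, hil, hlj, hl, hnormal, -⟩ := hY.exists_isNormalIn_of_ne hij hη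
  obtain ⟨f, hf, hf0, e, he, hYl⟩ := hY.exists_eq_linear hil hl
  have hle : S.interval (i + 1) (l + 1) ≤ S.interval (i + 1) j :=
    QNA.interval_le fun t h₁ h₂ => ⟨h₁, by omega⟩
  have OF := S.isOreExtension_forward (a := i) (l := j) hij'.le
  have OB := S.isOreExtension_backward hij'
  have hq (w) (hw : w ∈ S.interval (i + 1) j) : S.x j * w = S.act (S.h j) w * S.x j :=
    S.gen_mul_eq_of_defect_eq_zero (fun t => h t) hw
  have hcomm : S.x j * Y l - S.act (S.h j) (Y l) * S.x j = S.act (S.h j) f * S.defect j i := by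
    rw [hYl, map_add, map_mul, S.act_gen, mul_add, add_mul, hq e (hle he), ← mul_assoc,
      hq f (hle hf), defect, mul_sub, mul_smul_comm, mul_smul_comm, smul_mul_assoc, mul_assoc,
      mul_assoc]
    abel
  obtain ⟨b, hb, hxY⟩ := hnormal (S.x j) (QNA.gen_mem_interval hij'.le (Nat.lt_succ_self _))
  obtain ⟨m, hm⟩ := (S.mem_interval_succ_iff hij'.le b).1 hb
  obtain ⟨b₀, hb₀, hYb₀⟩ := OF.exists_comm_eq_mul (hY.mem_of_lt hil hlj) (hY.ne_zero l hil) hm hxY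
  have hb₀_eq_zero : b₀ = 0 := by
    obtain ⟨n, hn⟩ := (S.mem_interval_iff hij' b₀).1 hb₀
    have hfd := mul_mem (S.act_mem_interval (S.h j) (hle hf)) (S.defect_mem hij)
    exact mem_degLT_zero.1 (OB.mem_degLT_of_lead_mul_mem (w := Y l) (n := 1) (m := 0) (hle hf) hf0
      (mem_degLT_one.2 (by simpa [hYl] using hle he)) hn (mem_degLT_one.2 (hYb₀ ▸ hcomm ▸ hfd)))
  rw [hb₀_eq_zero, mul_zero, hcomm] at hYb₀
  exact mul_ne_zero (mt (map_eq_zero_iff _ (S.act (S.h j)).injective).1 hf0) hd hYb₀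

theorem tail_ne_zero (hY : S.IsPeeled η i Y) (hij : i < j) (hjk : j ≤ k)
    (hf : f ∈ S.interval (i + 1) (k + 1)) (hYk : Y k = f * S.x i + e) (hd : S.defect j i ≠ 0) :
    e ≠ 0 := by
  rintro rfl
  have := S.noZeroDivisors
  have hij' : (i : ℕ) < j := hij
  have hik : i ≤ k := hij.le.trans hjk
  have hik' : (i : ℕ) < k + 1 := Nat.lt_succ_of_le hik
  rw [add_zero] at hYk
  have hcomm := (S.isOreExtension_backward hik').comm_eq_zero_of_isNormalIn
    (S.mem_interval_iff hik') hf (left_ne_zero_of_mul (hYk ▸ hY.ne_zero k hik))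
    (hYk ▸ hY.isNormalIn_succ hik)
    (QNA.gen_mem_interval (t := j) hij' (Nat.lt_succ_of_le hjk))
  rw [S.gen_mul_gen_of_lt hij, S.act_gen, smul_mul_assoc, smul_sub, sub_sub_cancel_left,
    neg_eq_zero] at hcomm
  exact smul_ne_zero (S.eigval_ne_zero _ j) hd hcomm

theorem act_tail (hY : S.IsPeeled η i Y) (hik : i ≤ k) (hf : f ∈ S.interval (i + 1) (k + 1))
    (hf0 : f ≠ 0) (he : e ∈ S.interval (i + 1) (k + 1)) (hYk : Y k = f * S.x i + e)
    {ξ : Torus K r} {s : K} (hs : S.act ξ f = s • f) : S.act ξ e = (s * S.eigval ξ i) • e := by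
  obtain ⟨t, ht⟩ := hY.isHomogeneous k hik ξ
  have O := S.isOreExtension_backward (i := i) (b := k + 1) (Nat.lt_succ_of_le hik)
  obtain ⟨hft, het⟩ := O.coeff_eigen (S.act_gen ξ i) hf he (S.act_mem_interval ξ hf)
    (S.act_mem_interval ξ he) (hYk ▸ ht)
  rw [hs, smul_smul] at hft
  rw [het, ← smul_left_injective K hf0 hft, mul_comm]

theorem defect_mul_eq_mul_smul (hY : S.IsPeeled η i Y) (hik : i ≤ k) (hk : IsPred η k j)
    (h : ∀ t, i < t → t < j → S.defect j t = 0) (hf : f ∈ S.interval (i + 1) (k + 1))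
    (hf0 : f ≠ 0) (he : e ∈ S.interval (i + 1) (k + 1)) (hYk : Y k = f * S.x i + e) {m n : K}
    (hm : S.act (S.hstar i) f = m • f) (hn : S.act (S.h j) f = n • f) :
    S.defect j i * Y k =
      Y k * ((m * n * (S.lamstar i * S.eigval (S.hstar i) j)⁻¹) • S.defect j i) := by
  have := S.noZeroDivisors
  have hij : i < j := hik.trans_lt hk.1
  have O := S.isOreExtension_backward (Fin.lt_def.1 hij)
  have hle : S.interval (i + 1) (k + 1) ≤ S.interval (i + 1) j :=
    QNA.interval_le fun t h₁ h₂ => ⟨h₁, by have := hk.1; omega⟩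
  have hd := S.defect_mem hij
  have hdf := S.defect_mul hij h (hle hf)
  rw [hm, map_smul, hn, smul_smul] at hdf
  obtain ⟨b, hb, hdY⟩ := (hY.isNormalIn k hik j hk.1 j.2.le
    fun t h₁ h₂ => hk.2.1 ▸ hk.2.2 t h₁ h₂).1
    (S.defect j i) (QNA.interval_le (fun t h₁ h₂ => ⟨by omega, h₂⟩) hd)
  obtain ⟨t, ht⟩ := (S.mem_interval_iff hij b).1 hb
  rw [hYk] at hdY
  have hf_eq := (O.coeff_of_mul_eq_mul hd
    (O.mem_of_mul_linear_eq hd ht (hle hf) hf0 (hle he) hdY) (hle hf) (hle he) hdY).1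
  suffices hb : b = (m * n * (S.lamstar i * S.eigval (S.hstar i) j)⁻¹) • S.defect j i by
    rw [hYk, hdY, hb]
  have hℓp := mul_ne_zero (S.lamstar_ne_zero i) (S.eigval_ne_zero (S.hstar i) j)
  refine (S.act (S.hstar i)).injective (mul_left_cancel₀ hf0 ?_)
  rw [← hf_eq, hdf, map_smul, S.act_defect, S.eigval_hstar, smul_smul, inv_mul_cancel_right₀ hℓp,
    smul_mul_assoc, mul_smul_comm]

theorem mul_skewDelta_defect (hY : S.IsPeeled η i Y) (hik : i ≤ k) (hk : IsPred η k j)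
    (h : ∀ t, i < t → t < j → S.defect j t = 0) (hf : f ∈ S.interval (i + 1) (k + 1))
    (hf0 : f ≠ 0) (he : e ∈ S.interval (i + 1) (k + 1)) (hYk : Y k = f * S.x i + e) :
    f * skewDelta K S.act S.x S.hstar i (S.defect j i) =
      (S.lamstar i ^ 2 - 1) • (e * S.defect j i) := by
  have hij : i < j := hik.trans_lt hk.1
  have O := S.isOreExtension_backward (Fin.lt_def.1 hij)
  have hle : S.interval (i + 1) (k + 1) ≤ S.interval (i + 1) j :=
    QNA.interval_le fun t h₁ h₂ => ⟨h₁, by have := hk.1; omega⟩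
  have hfh := hY.isHomogeneous_of_eq_linear hik hf he hYk
  obtain ⟨hpq, hd⟩ := S.eigval_mul_eigval_and_defect_mem hij
  obtain ⟨m, hm0, hm⟩ := hfh.exists_ne_zero hf0 (S.hstar i)
  obtain ⟨n, hn0, hn⟩ := hfh.exists_ne_zero hf0 (S.h j)
  have hde := S.defect_mul hij h (hle he)
  rw [hY.act_tail hik hf hf0 he hYk hm, map_smul, hY.act_tail hik hf hf0 he hYk hn, smul_smul,
    S.eigval_hstar] at hde
  have hℓ := S.lamstar_ne_zero i
  have hp := S.eigval_ne_zero (S.hstar i) j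
  have hdY := hY.defect_mul_eq_mul_smul hik hk h hf hf0 he hYk hm hn
  set κ := m * n * (S.lamstar i * S.eigval (S.hstar i) j)⁻¹ with hκ
  rw [hYk] at hdY
  have he_eq := (O.coeff_of_mul_eq_mul hd (Subalgebra.smul_mem _ hd κ) (hle hf) (hle he) hdY).2
  have hκ0 : κ ≠ 0 := mul_ne_zero (mul_ne_zero hm0 hn0) (inv_ne_zero (mul_ne_zero hℓ hp))
  have hscalar : m * S.lamstar i * (n * S.eigval (S.h j) i) = κ * S.lamstar i ^ 2 := by
    rw [hκ, eq_inv_of_mul_eq_one_right hpq]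
    field_simp
  refine smul_right_injective R hκ0 ?_
  change κ • _ = κ • _
  rw [← mul_smul_comm, ← skewDelta_smul, skewDelta, eq_sub_of_add_eq he_eq.symm, hde, mul_smul_comm,
    smul_mul_assoc, hscalar]
  module

theorem not_lt_of_defect_ne_zero (hY : S.IsPeeled η i Y) (hk : IsPred η k j) (hη : η i = η j)
    (h : ∀ t, i < t → t < j → S.defect j t = 0) (hd : S.defect j i ≠ 0)
    (ih : ∀ l < j, IsPred η i l → S.defect l i ≠ 0) : ¬ i < k := by
  intro hik
  have := S.noZeroDivisors
  have hηk : η i = η k := hη.trans hk.2.1.symm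
  obtain ⟨f, hf, hf0, e, he, hYk⟩ := hY.exists_eq_linear hik.le hηk.symm
  have O := S.isOreExtension_backward (i := i) (b := k + 1) (Nat.lt_succ_of_lt hik)
  have hfh := hY.isHomogeneous_of_eq_linear hik.le hf he hYk
  obtain ⟨m, hm0, hm⟩ := hfh.exists_ne_zero hf0 (S.hstar i)
  have he_eigen := hY.act_tail hik.le hf hf0 he hYk hm
  rw [S.eigval_hstar] at he_eigen
  obtain ⟨l, hlk, hl⟩ := exists_isPred_of_lt hik hηk
  have he0 := hY.tail_ne_zero hl.1 hlk hf hYk (ih l (hlk.trans_lt hk.1) hl)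
  obtain ⟨μ, hμ⟩ := hY.exists_gen_mul_eq_smul hik.le
  obtain ⟨hδf, hδe⟩ := O.quadratic_eigen hf he hf0 hm he_eigen (hYk ▸ hμ)
  have hδd := hY.mul_skewDelta_defect hik.le hk h hf hf0 he hYk
  have hiter := mul_iterate_skewDelta hm0 hm he_eigen (hδf.trans (by rw [mul_one_sub]))
    (sub_eq_zero.2 hδe) hδd
  have hne (n : ℕ) : (skewDelta K S.act S.x S.hstar i)^[n] (S.defect j i) ≠ 0 := by
    induction n with
    | zero => exact hd
    | succ n ihn =>
      refine right_ne_zero_of_mul (a := f) ?_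
      rw [hiter n]
      exact smul_ne_zero (sub_ne_zero.2 (S.lamstar_not_root i (n + 2) (by omega)))
        (mul_ne_zero he0 ihn)
  obtain ⟨n, hn⟩ := S.locnilRev i (S.defect j i) (S.RsubRev_eq_interval i ▸
    QNA.interval_le (fun t h₁ _ => ⟨h₁, t.2⟩) (S.defect_mem (hik.trans hk.1)))
  exact hne n hn

end IsPeeled

theorem defect_of_isPred {c y : Fin N → R} (hseq : IsPrimeSeq K S.toQNA η c y)
    (hk : IsPred η k j) : S.defect j k ≠ 0 ∧ ∀ t, k < t → t < j → S.defect j t = 0 := by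
  induction j using WellFoundedLT.induction generalizing k with
  | ind j ih =>
    obtain ⟨i, hij, hd, h⟩ := S.exists_defect_ne_zero (hseq.not_deltaZero hk)
    obtain ⟨Y, hY⟩ := exists_isPeeled hseq i.2.le
    have hη := hY.eq_of_defect_ne_zero hij h hd
    have hki : k ≤ i := not_lt.1
      (hY.not_lt_of_defect_ne_zero hk hη h hd fun l hl hil => (ih l hl hil).1)
    obtain rfl : k = i := hki.eq_of_not_lt fun hki => hk.2.2 i hki hij hη
    exact ⟨hd, h⟩

end SymQNA

namespace SymQNA

variable {K : Type u} [Field K] {R : Type v} [Ring R] [Algebra K R] {N r : ℕ}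
  {S : SymQNA K R N r} {η : Fin N → ℤ} {Y : Fin N → R} {j k l t : Fin N}

-- In `x_j Y_j = Y_j (x_j + b)` with `Y_j = u x_j + g`, the `x_j`-free part is `g b = 0`, and
-- `b = 0` forces `λ_j g = g` by homogeneity.
theorem IsPeeled.exists_eq_smul_gen_of_isolated {i : ℕ} (hY : S.IsPeeled η i Y) (hij : i ≤ j)
    (hη : ∀ t : Fin N, i ≤ t → t < j → η t ≠ η j)
    (h : ∀ t : Fin N, i ≤ t → t < j → S.defect j t = 0) : ∃ u : K, u ≠ 0 ∧ Y j = u • S.x j := by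
  have := S.noZeroDivisors
  have := S.nontrivial
  have O := S.isOreExtension_forward hij
  obtain ⟨f, ⟨u, hu, hf⟩, g, hg, hYj⟩ := hY.exists_lead j hij
  obtain rfl : f = u • 1 := by
    rcases hf with ⟨p, hip, hp, -⟩ | ⟨-, hf⟩
    exacts [absurd hp.2.1 (hη p hip hp.1), hf]
  have h1 : (1 : R) ∈ S.interval i j := one_mem _
  have hu1 : u • (1 : R) ∈ S.interval i j := Subalgebra.smul_mem _ h1 u
  obtain ⟨m, hm⟩ := hY.isHomogeneous j hij (S.h j)
  obtain ⟨hm1, hmg⟩ := O.coeff_eigen (S.act_gen _ j) hu1 hg (S.act_mem_interval _ hu1)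
    (S.act_mem_interval _ hg) (hYj ▸ hm)
  obtain rfl : S.lam j = m := by
    rw [map_smul, map_one, smul_smul, smul_smul, S.eigval_h] at hm1
    exact mul_right_cancel₀ hu (smul_left_injective K one_ne_zero hm1)
  obtain ⟨b, hb, hxY⟩ := (hY.isNormalIn_succ hij).1 (S.x j)
    (QNA.gen_mem_interval hij (Nat.lt_succ_self _))
  obtain ⟨n, hn⟩ := (S.mem_interval_succ_iff hij b).1 hb
  rw [hYj] at hxY
  obtain ⟨b₀, hb₀, rfl⟩ := O.gen_mul_linear_eq (s := 1) hu1 (smul_ne_zero hu one_ne_zero) hg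
    (by rw [map_smul, map_one, one_smul]) hn hxY
  have hσ (w) (hw : w ∈ S.interval i j) : S.x j * w = S.act (S.h j) w * S.x j :=
    S.gen_mul_eq_of_defect_eq_zero h hw
  obtain ⟨-, hlin, hconst⟩ := O.quadratic_unique hu1 (S.act_mem_interval (S.h j) hg) (zero_mem _)
    hu1 (add_mem (Subalgebra.smul_mem _ (S.act_mem_interval (S.h j) hb₀) u) hg) (mul_mem hg hb₀)
    (by
      rw [pow_two]
      simp only [mul_add, add_mul, hσ g hg, hσ b₀ hb₀, smul_mul_assoc, one_mul, mul_smul_comm,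
        one_smul, add_zero, add_assoc] at hxY ⊢
      rw [hxY]
      abel)
  suffices hg0 : g = 0 from ⟨u, hu, by rw [hYj, hg0, add_zero, smul_mul_assoc, one_mul]⟩
  rcases mul_eq_zero.1 hconst.symm with hg0 | hb0
  · exact hg0
  · rw [hb0, map_zero, smul_zero, zero_add, hmg, ← sub_eq_zero] at hlin
    by_contra hg0
    exact smul_ne_zero (sub_ne_zero.2 (S.lam_ne_one j)) hg0 (by rw [sub_smul, one_smul, hlin])

variable (S) in
/-- The normal element `x_j x_k - (1 - λ*_k)⁻¹ δ_j(x_k)` attached to two consecutive indices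
`k < j` of a level set: up to a scalar, the leading term of `y_j` as seen from level `k`. -/
def adjacentPrime (j k : Fin N) : R :=
  S.x j * S.x k - (1 - S.lamstar k)⁻¹ • S.defect j k

theorem one_sub_lamstar_ne_zero (k : Fin N) : 1 - S.lamstar k ≠ 0 :=
  sub_ne_zero.2 fun h => S.lamstar_not_root k 1 one_ne_zero (by rw [pow_one, h])

theorem adjacentPrime_eq (j k : Fin N) :
    S.adjacentPrime j k = S.eigval (S.h j) k • (S.x k * S.x j) +
      (1 - (1 - S.lamstar k)⁻¹) • S.defect j k := by
  rw [adjacentPrime, S.gen_mul_gen]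
  module

-- Seen from level `k + 1`, `Y_j` has become `x_j`, so `Y_j = u x_j x_k + e`; the coefficient of
-- `x_k` in `x_k Y_j = α Y_j x_k` then determines `e`.
theorem IsPeeled.exists_eq_smul_adjacentPrime (hY : S.IsPeeled η k Y) (hk : IsPred η k j)
    (h : ∀ t, k < t → t < j → S.defect j t = 0) :
    ∃ u : K, u ≠ 0 ∧ Y j = u • S.adjacentPrime j k := by
  have := S.noZeroDivisors
  have hkj : (k : ℕ) < j := hk.1
  obtain ⟨Y', hst⟩ := hY.exists_isPeelStep
  obtain ⟨e, he, hYj⟩ := hst.eq_linear j hk.1.le hk.2.1.symm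
  obtain ⟨u, hu, hYj'⟩ := (hst.isPeeled hY).exists_eq_smul_gen_of_isolated hkj hk.2.2 h
  have O := S.isOreExtension_backward (i := k) (b := j + 1) (Nat.lt_succ_of_lt hkj)
  have hmem := hst.mem j hk.1.le
  have hτ : S.act (S.hstar k) (Y' j) = S.eigval (S.hstar k) j • Y' j := by
    rw [hYj', map_smul, S.act_gen, smul_comm]
  have hτe := hY.act_tail hk.1.le hmem (hst.ne_zero j hk.1.le) he hYj hτ
  obtain ⟨α, hα⟩ := hY.exists_gen_mul_eq_smul hk.1.le
  have hcomm := (O.quadratic_eigen hmem he (hst.ne_zero j hk.1.le) hτ hτe (hYj ▸ hα)).1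
  refine ⟨u, hu, ?_⟩
  rw [S.eigval_hstar, ← mul_one_sub, hτ, hYj', mul_smul_comm, S.gen_mul_gen_of_lt hk.1,
    smul_mul_assoc, smul_mul_assoc, smul_comm u, ← smul_sub, ← smul_sub, sub_sub_cancel_left,
    mul_smul, smul_neg] at hcomm
  have hp := S.eigval_ne_zero (S.hstar k) j
  have he_eq : (1 - S.lamstar k) • e = -(u • S.defect j k) :=
    smul_right_injective R hp hcomm.symm
  rw [hYj, hYj', adjacentPrime, smul_mul_assoc, smul_sub, sub_eq_add_neg, smul_comm u, ← smul_neg,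
    ← he_eq, inv_smul_smul₀ (S.one_sub_lamstar_ne_zero k)]

theorem gen_mul_adjacentPrime (hkj : k < j) (h : ∀ t, k < t → t < j → S.defect j t = 0)
    (hlam : S.lam j * S.lamstar k = 1) :
    S.x j * S.adjacentPrime j k = S.eigval (S.h j) k • (S.adjacentPrime j k * S.x j) := by
  have hd := S.gen_mul_eq_of_defect_eq_zero (fun t => h t) (S.defect_mem hkj)
  rw [S.act_defect, S.eigval_h, smul_mul_assoc] at hd
  have hℓ := S.one_sub_lamstar_ne_zero k
  have hscalar : S.lam j * (1 - (1 - S.lamstar k)⁻¹) = -(1 - S.lamstar k)⁻¹ := by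
    field_simp
    linear_combination -hlam
  calc S.x j * S.adjacentPrime j k
      = S.eigval (S.h j) k • (S.x j * S.x k * S.x j) + (S.eigval (S.h j) k *
          (S.lam j * (1 - (1 - S.lamstar k)⁻¹))) • (S.defect j k * S.x j) := by
        rw [S.adjacentPrime_eq, mul_add, mul_smul_comm, mul_smul_comm, hd, ← mul_assoc]
        module
    _ = S.eigval (S.h j) k • (S.adjacentPrime j k * S.x j) := by
        rw [hscalar, adjacentPrime, sub_mul, smul_mul_assoc]
        module

end SymQNA

theorem ordMonomial_eq_mul_pow_mul {R : Type v} [Ring R] {N : ℕ} (x : Fin N → R) (j : Fin N)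
    (m : Fin N → ℕ) : ordMonomial x m = ordMonomial x (Set.indicator (Set.Iio j) m) * x j ^ m j *
      ordMonomial x (Set.indicator (Set.Ioi j) m) := by
  have hlt (t) (ht : Set.indicator (Set.Iio j) m t ≠ 0) : t < j :=
    Set.mem_of_indicator_ne_zero (s := Set.Iio j) ht
  have hgt (t) (ht : Set.indicator (Set.Ioi j) m t ≠ 0) : j < t :=
    Set.mem_of_indicator_ne_zero (s := Set.Ioi j) ht
  have hj (t) (ht : (Pi.single j (m j) : Fin N → ℕ) t ≠ 0) : t = j :=
    of_not_not (mt (fun h => Pi.single_eq_of_ne h _) ht)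
  rw [← ordMonomial_single, ordMonomial_mul x j (fun t ht => (hlt t ht).le)
    (fun t ht => (hj t ht).ge), ordMonomial_mul x j (fun t ht => ?_)
    fun t ht => (hgt t ht).le]
  · congr 1
    ext t
    rcases lt_trichotomy t j with h | h | h
    · simp [h, h.ne, h.le]
    · simp [h]
    · simp [h, h.ne', h.le]
  · by_contra! htj
    exact ht (by rw [Pi.add_apply, of_not_not (mt (hlt t) (Fin.lt_def.2 htj).not_gt),
      of_not_not (mt (hj t) (Fin.lt_def.2 htj).ne')])

namespace SymQNA

variable {K : Type u} [Field K] {R : Type v} [Ring R] [Algebra K R] {N r : ℕ}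
  (S : SymQNA K R N r) {j l : Fin N} {a b : ℕ} {v w : R}

theorem mul_gen_pow_mul_mem_monomialSpan (n : ℕ) (hv : v ∈ S.interval a j)
    (hw : w ∈ S.interval (j + 1) b) :
    v * S.x j ^ n * w ∈ monomialSpan K S.x {m | m j = n} := by
  rw [mem_interval_iff_mem_monomialSpan] at hv hw
  have hT : exponentsIn N a j ⊆ exponentsIn N 0 j := exponentsIn_mono (Nat.zero_le a) le_rfl
  refine mul_mem_monomialSpan j (fun m hm t ht => Nat.lt_succ_iff.1 (hm.1 t ht).2)
    (fun m hm t ht => ((Nat.lt_succ_self _).trans_le (hm t ht).1).le) (fun m₁ h₁ m₂ h₂ => ?_)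
    (mul_pow_mem_monomialSpan (monomialSpan_mono S.x hT hv) (Nat.zero_le j) n) hw
  rw [Set.mem_ofPred, Pi.add_apply, h₁.2,
    apply_eq_zero_of_mem_exponentsIn h₂ (Or.inl (Nat.lt_succ_self j)), add_zero]

theorem interval_le_of_forall_mul_pow_mul_mem (j : Fin N) {T : Submodule K R}
    (h : ∀ v ∈ S.interval a j, ∀ n, ∀ w ∈ S.interval (j + 1) b, v * S.x j ^ n * w ∈ T) :
    Subalgebra.toSubmodule (S.interval a b) ≤ T := by
  intro w hw
  rw [Subalgebra.mem_toSubmodule, mem_interval_iff_mem_monomialSpan] at hw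
  refine Submodule.span_le.2 ?_ hw
  rintro _ ⟨m, hm, rfl⟩
  rw [SetLike.mem_coe, ordMonomial_eq_mul_pow_mul S.x j m]
  refine h _ (S.monomialSpan_le_interval (ordMonomial_mem_monomialSpan fun t ht => ?_)) _ _
    (S.monomialSpan_le_interval (ordMonomial_mem_monomialSpan fun t ht => ?_))
  all_goals rw [Set.indicator_apply_ne_zero] at ht
  · exact ⟨(hm t ht.2).1, ht.1⟩
  · exact ⟨ht.1, (hm t ht.2).2⟩

theorem gen_mul_eq_act_hstar_of_defect_eq_zero
    (h : ∀ t : Fin N, j < t → t < b → S.defect t j = 0) (hw : w ∈ S.interval (j + 1) b) :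
    S.x j * w = S.act (S.hstar j) w * S.x j := by
  induction hw using Algebra.adjoin_induction with
  | mem w hw =>
    obtain ⟨t, ht, rfl⟩ := hw
    have hjt : j < t := ht.1
    rw [S.act_gen, smul_mul_assoc, S.gen_mul_gen_of_lt hjt, h t hjt ht.2, sub_zero]
  | algebraMap s => rw [AlgEquiv.commutes, Algebra.commutes]
  | add v w _ _ hv hw => rw [mul_add, hv, hw, map_add, add_mul]
  | mul v w _ _ hv hw => rw [← mul_assoc, hv, mul_assoc, hw, map_mul, mul_assoc]

theorem gen_mul_mem_monomialSpan (h : ∀ t : Fin N, a ≤ t → t < j → S.defect j t = 0)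
    (hw : w ∈ S.interval a b) : S.x j * w ∈ monomialSpan K S.x {m | m j ≠ 0} := by
  refine S.interval_le_of_forall_mul_pow_mul_mem j
    (T := (monomialSpan K S.x {m | m j ≠ 0}).comap (LinearMap.mulLeft K (S.x j))) ?_ hw
  intro v hv n w hw
  rw [Submodule.mem_comap, LinearMap.mulLeft_apply, ← mul_assoc, ← mul_assoc,
    S.gen_mul_eq_of_defect_eq_zero h hv, mul_assoc _ (S.x j), ← pow_succ']
  exact monomialSpan_mono S.x (fun m (hm : m j = n + 1) => ne_of_eq_of_ne hm n.succ_ne_zero)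
    (S.mul_gen_pow_mul_mem_monomialSpan (n + 1) (S.act_mem_interval _ hv) hw)

theorem mul_gen_mem_monomialSpan (h : ∀ t : Fin N, j < t → t < b → S.defect t j = 0)
    (hw : w ∈ S.interval a b) : w * S.x j ∈ monomialSpan K S.x {m | m j ≠ 0} := by
  refine S.interval_le_of_forall_mul_pow_mul_mem j
    (T := (monomialSpan K S.x {m | m j ≠ 0}).comap (LinearMap.mulRight K (S.x j))) ?_ hw
  intro v hv n w hw
  obtain ⟨w, rfl⟩ := (S.act (S.hstar j)).surjective w
  rw [S.act_mem_interval_iff] at hw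
  rw [Submodule.mem_comap, LinearMap.mulRight_apply, mul_assoc,
    ← S.gen_mul_eq_act_hstar_of_defect_eq_zero h hw, ← mul_assoc, mul_assoc v, ← pow_succ]
  exact monomialSpan_mono S.x (fun m (hm : m j = n + 1) => ne_of_eq_of_ne hm n.succ_ne_zero)
    (S.mul_gen_pow_mul_mem_monomialSpan (n + 1) hv hw)

end SymQNA

/-! ### Three consecutive indices -/

namespace SymQNA

variable {K : Type u} [Field K] {R : Type v} [Ring R] [Algebra K R] {N r : ℕ}
  {S : SymQNA K R N r} {η : Fin N → ℤ} {Y : Fin N → R} {j k l t : Fin N}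

theorem adjacentPrime_mul_gen (hjt : j < t) (htl : t < l)
    (h : ∀ t, j < t → t < l → S.defect l t = 0) :
    S.adjacentPrime l j * S.x t =
      (S.eigval (S.hstar j) t * S.eigval (S.h l) t) • (S.x t * S.adjacentPrime l j) -
        S.eigval (S.hstar j) t • (S.x l * S.defect t j) := by
  have hxt : S.x t ∈ S.interval (j + 1) l := QNA.gen_mem_interval hjt htl
  have hdx := S.defect_mul (hjt.trans htl) h hxt
  have hlt := S.gen_mul_eq_of_defect_eq_zero (fun t => h t) hxt
  rw [S.act_gen, map_smul, S.act_gen, smul_smul, smul_mul_assoc] at hdx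
  rw [S.act_gen, smul_mul_assoc] at hlt
  rw [adjacentPrime, sub_mul, smul_mul_assoc, hdx, mul_assoc, S.gen_mul_gen_of_lt hjt,
    mul_smul_comm, mul_sub, ← mul_assoc, hlt, smul_mul_assoc, mul_sub, mul_smul_comm, mul_assoc]
  module

theorem eq_zero_of_adjacentPrime_mul_mem (hkj : k < j) {b : ℕ} (hjb : j < b) {w : R}
    (hw : w ∈ S.interval k b) (h : S.adjacentPrime j k * w ∈ S.interval (k + 1) b) : w = 0 := by
  have := S.noZeroDivisors
  have hkb : (k : ℕ) < b := (Fin.lt_def.1 hkj).trans hjb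
  obtain ⟨n, hn⟩ := (S.mem_interval_iff hkb w).1 hw
  refine mem_degLT_zero.1 ((S.isOreExtension_backward hkb).mem_degLT_of_lead_mul_mem (n := 1)
    (m := 0) (QNA.gen_mem_interval hkj hjb) (S.gen_ne_zero j) (mem_degLT_one.2 ?_) hn
    (mem_degLT_one.2 h))
  rw [adjacentPrime, pow_one, sub_sub_cancel_left]
  exact neg_mem (Subalgebra.smul_mem _
    (QNA.interval_le (fun t h₁ h₂ => ⟨h₁, h₂.trans hjb⟩) (S.defect_mem hkj)) _)

-- For the normal element `g = adjacentPrime l j`, the difference of `g x_t` and a multiple of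
-- `x_t g` is divisible by `g`, of degree one in `x_j`, and equals `x_l δ_t(x_j)`, free of `x_j`.
theorem IsPeeled.defect_eq_zero_of_between (hY : S.IsPeeled η j Y) (hj : IsPred η j l)
    (h : ∀ t, j < t → t < l → S.defect l t = 0) (hjt : j < t) (htl : t < l) :
    S.defect t j = 0 := by
  have := S.noZeroDivisors
  have hxt : S.x t ∈ S.interval j (l + 1) :=
    QNA.gen_mem_interval hjt.le (Nat.lt_succ_of_lt htl)
  obtain ⟨u, hu, hYl⟩ := hY.exists_eq_smul_adjacentPrime hj h
  obtain ⟨b, hb, hxY⟩ := (hY.isNormalIn_succ hj.1.le).1 (S.x t) hxt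
  rw [hYl, mul_smul_comm, smul_mul_assoc] at hxY
  replace hxY := smul_right_injective R hu hxY
  set p := S.eigval (S.hstar j) t
  set q := S.eigval (S.h l) t
  have hdvd : S.adjacentPrime l j * ((p * q) • b - S.x t) = p • (S.x l * S.defect t j) := by
    rw [mul_sub, adjacentPrime_mul_gen hjt htl h, mul_smul_comm, ← hxY, sub_sub_cancel]
  have hdt : S.x l * S.defect t j ∈ S.interval (j + 1) (l + 1) :=
    mul_mem (QNA.gen_mem_interval (Fin.lt_def.1 hj.1) (Nat.lt_succ_self _))
      (QNA.interval_le (fun s h₁ h₂ => ⟨h₁, by have := htl; omega⟩) (S.defect_mem hjt))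
  rw [eq_zero_of_adjacentPrime_mul_mem hj.1 (Nat.lt_succ_self _)
    (sub_mem (Subalgebra.smul_mem _ hb (p * q)) hxt) (hdvd ▸ Subalgebra.smul_mem _ hdt p),
    mul_zero] at hdvd
  exact (mul_eq_zero.1 ((smul_eq_zero_iff_right (S.eigval_ne_zero _ t)).1 hdvd.symm)).resolve_left
    (S.gen_ne_zero l)

-- `g = adjacentPrime j k` is normal, so `δ_l(x_j) g = g β`; comparing coefficients of `x_k` on both
-- sides determines `β`.
theorem IsPeeled.lamstar_smul_defect_mul_adjacentPrime (hY : S.IsPeeled η k Y) (hk : IsPred η k j)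
    (hj : IsPred η j l) (hdj : ∀ t, k < t → t < j → S.defect j t = 0)
    (hdl : ∀ t, j < t → t < l → S.defect t j = 0) :
    S.lamstar j • (S.defect l j * S.adjacentPrime j k) =
      (S.eigval (S.h j) k * S.eigval (S.h l) j * S.eigval (S.h l) k) •
        (S.adjacentPrime j k * S.defect l j) := by
  have := S.noZeroDivisors
  have hkj : (k : ℕ) < j := hk.1
  have hjl : (j : ℕ) < l := hj.1
  have O := S.isOreExtension_backward (hkj.trans hjl)
  obtain ⟨hbl, hd⟩ := S.eigval_mul_eigval_and_defect_mem hj.1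
  have hak := (S.eigval_mul_eigval_and_defect_mem hk.1).1
  have hek := (S.eigval_mul_eigval_and_defect_mem (hk.1.trans hj.1)).1
  have hxd := S.gen_mul_eq_act_hstar_of_defect_eq_zero hdl hd
  rw [S.act_defect, S.eigval_hstar, smul_mul_assoc] at hxd
  have hd' : S.defect l j ∈ S.interval (k + 1) l :=
    QNA.interval_le (fun t h₁ h₂ => ⟨by omega, h₂⟩) hd
  have hxj : S.x j ∈ S.interval (k + 1) l := QNA.gen_mem_interval hkj hjl
  have hd₁ := neg_mem (Subalgebra.smul_mem _ (QNA.interval_le (b' := l)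
    (fun t h₁ h₂ => ⟨h₁, h₂.trans hjl⟩) (S.defect_mem hk.1)) (1 - S.lamstar k)⁻¹)
  obtain ⟨u, hu, hYj⟩ := hY.exists_eq_smul_adjacentPrime hk hdj
  obtain ⟨β, hβ, hdg⟩ := (hY.isNormalIn j hk.1.le l hjl l.2.le
    fun t h₁ h₂ => hj.2.1 ▸ hj.2.2 t h₁ h₂).1 (S.defect l j)
    (QNA.interval_le (fun t h₁ h₂ => ⟨by omega, h₂⟩) hd)
  rw [hYj, mul_smul_comm, smul_mul_assoc] at hdg
  replace hdg := smul_right_injective R hu hdg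
  obtain ⟨n, hn⟩ := (S.mem_interval_iff (hkj.trans hjl) β).1 hβ
  suffices hβ_eq : S.lamstar j • β =
      (S.eigval (S.h j) k * S.eigval (S.h l) j * S.eigval (S.h l) k) • S.defect l j by
    rw [hdg, ← mul_smul_comm, hβ_eq, mul_smul_comm]
  rw [adjacentPrime, sub_eq_add_neg] at hdg
  have hlead := (O.coeff_of_mul_eq_mul hd'
    (O.mem_of_mul_linear_eq hd' hn hxj (S.gen_ne_zero j) hd₁ hdg) hxj hd₁ hdg).1
  refine (S.act (S.hstar k)).injective (mul_left_cancel₀ (S.gen_ne_zero j) ?_)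
  rw [map_smul, mul_smul_comm, ← hlead, map_smul, S.act_defect, mul_smul_comm, mul_smul_comm, hxd,
    smul_smul, smul_smul]
  congr 1
  linear_combination (-S.lamstar j) * (hbl * S.eigval (S.hstar k) j * S.eigval (S.h j) k *
    S.eigval (S.hstar k) l * S.eigval (S.h l) k + hak * S.eigval (S.hstar k) l *
    S.eigval (S.h l) k + hek)

theorem exists_skewDelta_adjacentPrime_eq (hkj : k < j) (hjl : j < l) :
    ∃ w ∈ S.interval (k + 1) l, skewDelta K S.act S.x S.h l (S.adjacentPrime j k) =
      (S.eigval (S.h j) k * S.eigval (S.h l) k) • (S.x k * S.defect l j) + w := by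
  have hkj' : (k : ℕ) < j := hkj
  have hjl' : (j : ℕ) < l := hjl
  have O := S.isOreExtension_forward (a := k + 1) (l := l) (hkj'.trans hjl')
  have hd : S.defect j k ∈ S.interval (k + 1) l :=
    QNA.interval_le (fun t h₁ h₂ => ⟨h₁, h₂.trans hjl'⟩) (S.defect_mem hkj)
  refine ⟨_, add_mem
    (Subalgebra.smul_mem _ (mul_mem (S.defect_mem (hkj.trans hjl))
      (QNA.gen_mem_interval hkj' hjl')) (S.eigval (S.h j) k))
    (Subalgebra.smul_mem _ (O.comm_mem _ hd) (1 - (1 - S.lamstar k)⁻¹)), ?_⟩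
  rw [S.adjacentPrime_eq, skewDelta_add, skewDelta_smul, skewDelta_smul, skewDelta_mul,
    skewDelta_gen, skewDelta_gen, S.act_gen, skewDelta]
  simp only [smul_mul_assoc]
  module

theorem adjacentPrime_mul_defect : S.adjacentPrime j k * S.defect l j =
    S.eigval (S.h j) k • (S.x k * S.x j * S.defect l j) +
      (1 - (1 - S.lamstar k)⁻¹) • (S.defect j k * S.defect l j) := by
  rw [adjacentPrime_eq, add_mul, smul_mul_assoc, smul_mul_assoc]

-- Apply the skew derivation `δ_l` to `x_j g = χ_j(x_k) g x_j`.
theorem defect_mul_adjacentPrime_add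
    (hxg : S.x j * S.adjacentPrime j k = S.eigval (S.h j) k • (S.adjacentPrime j k * S.x j)) :
    S.defect l j * S.adjacentPrime j k + S.eigval (S.h l) j •
        (S.x j * skewDelta K S.act S.x S.h l (S.adjacentPrime j k)) =
      S.eigval (S.h j) k • (skewDelta K S.act S.x S.h l (S.adjacentPrime j k) * S.x j) +
      (S.eigval (S.h j) k * S.eigval (S.h l) j * S.eigval (S.h l) k) •
        (S.adjacentPrime j k * S.defect l j) := by
  have hact : S.act (S.h l) (S.adjacentPrime j k) =
      (S.eigval (S.h l) j * S.eigval (S.h l) k) • S.adjacentPrime j k := by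
    rw [adjacentPrime, map_sub, map_smul, map_mul, S.act_gen, S.act_gen, S.act_defect,
      smul_mul_smul_comm]
    module
  have hδ := congrArg (skewDelta K S.act S.x S.h l) hxg
  rw [skewDelta_smul, skewDelta_mul, skewDelta_mul, skewDelta_gen, S.act_gen, hact,
    smul_mul_assoc, smul_mul_assoc, smul_add, smul_smul, ← mul_assoc] at hδ
  exact hδ

theorem defect_mul_defect_mem (hkj : k < j) (hjl : j < l) :
    S.defect j k * S.defect l j ∈ monomialSpan K S.x {m | m j = 0} := by
  simpa only [pow_zero, mul_one] using S.mul_gen_pow_mul_mem_monomialSpan 0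
    (QNA.interval_le (fun t h₁ h₂ => ⟨(Nat.le_succ _).trans h₁, h₂⟩) (S.defect_mem hkj))
    (S.defect_mem hjl)

-- The outcome of eliminating `δ_l(x_j) adjacentPrime j k` from `defect_mul_adjacentPrime_add`:
-- every term on the right involves `x_j`, and none on the left does.
theorem IsPeeled.smul_defect_mul_defect_eq (hY : S.IsPeeled η k Y) (hk : IsPred η k j)
    (hj : IsPred η j l) (hdj : ∀ t, k < t → t < j → S.defect j t = 0)
    (hdl : ∀ t, j < t → t < l → S.defect t j = 0) (hlam : S.lam j * S.lamstar k = 1) {w : R}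
    (hw : skewDelta K S.act S.x S.h l (S.adjacentPrime j k) =
      (S.eigval (S.h j) k * S.eigval (S.h l) k) • (S.x k * S.defect l j) + w) :
    (S.eigval (S.h j) k * S.eigval (S.h l) j * S.eigval (S.h l) k *
      (1 - (1 - S.lamstar j) * (1 - S.lamstar k)⁻¹)) • (S.defect j k * S.defect l j) =
    (S.lamstar j * S.eigval (S.h j) k) •
        (skewDelta K S.act S.x S.h l (S.adjacentPrime j k) * S.x j) -
      (S.lamstar j * S.eigval (S.h l) j) • (S.x j * w) -
      (S.eigval (S.h j) k ^ 2 * S.eigval (S.h l) j * S.eigval (S.h l) k) •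
        (S.x k * S.x j * S.defect l j) := by
  have hsum := defect_mul_adjacentPrime_add (l := l) (gen_mul_adjacentPrime hk.1 hdj hlam)
  have hdg := hY.lamstar_smul_defect_mul_adjacentPrime hk hj hdj hdl
  have hgd := S.adjacentPrime_mul_defect (j := j) (k := k) (l := l)
  have hxδ : S.x j * skewDelta K S.act S.x S.h l (S.adjacentPrime j k) =
      (S.eigval (S.h j) k * S.eigval (S.h l) k) • (S.eigval (S.h j) k •
        (S.x k * S.x j * S.defect l j) + S.defect j k * S.defect l j) + S.x j * w := by
    rw [hw, mul_add, mul_smul_comm, ← mul_assoc, S.gen_mul_gen, add_mul, smul_mul_assoc]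
  rw [hgd] at hsum hdg
  rw [hxδ] at hsum
  linear_combination (norm := module) S.lamstar j • hsum - hdg

theorem skewDelta_adjacentPrime_mul_gen_mem (hkj : k < j) (hjl : j < l)
    (hdl : ∀ t, j < t → t < l → S.defect t j = 0) :
    skewDelta K S.act S.x S.h l (S.adjacentPrime j k) * S.x j ∈
      monomialSpan K S.x {m | m j ≠ 0} := by
  have hkj' : (k : ℕ) < j := hkj
  have hjl' : (j : ℕ) < l := hjl
  obtain ⟨w, hw, hδ⟩ := S.exists_skewDelta_adjacentPrime_eq hkj hjl
  refine S.mul_gen_mem_monomialSpan (a := k) (b := l) hdl (hδ ▸ add_mem (Subalgebra.smul_mem _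
    (mul_mem (QNA.gen_mem_interval le_rfl (hkj'.trans hjl')) ?_) _) ?_)
  · exact QNA.interval_le (fun t h₁ h₂ => ⟨by omega, h₂⟩) (S.defect_mem hjl)
  · exact QNA.interval_le (fun t h₁ h₂ => ⟨by omega, h₂⟩) hw

theorem gen_mul_gen_mul_defect_mem (hkj : k < j) (hjl : j < l) :
    S.x k * S.x j * S.defect l j ∈ monomialSpan K S.x {m | m j ≠ 0} := by
  have h := S.mul_gen_pow_mul_mem_monomialSpan 1
    (QNA.gen_mem_interval le_rfl (Fin.lt_def.1 hkj)) (S.defect_mem hjl)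
  rw [pow_one] at h
  exact monomialSpan_mono S.x (fun m (hm : m j = 1) => ne_of_eq_of_ne hm one_ne_zero) h

theorem IsPeeled.smul_defect_mul_defect_mem (hY : S.IsPeeled η k Y) (hk : IsPred η k j)
    (hj : IsPred η j l) (hdj : ∀ t, k < t → t < j → S.defect j t = 0)
    (hdl : ∀ t, j < t → t < l → S.defect t j = 0) (hlam : S.lam j * S.lamstar k = 1) :
    (S.eigval (S.h j) k * S.eigval (S.h l) j * S.eigval (S.h l) k *
      (1 - (1 - S.lamstar j) * (1 - S.lamstar k)⁻¹)) • (S.defect j k * S.defect l j) ∈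
      monomialSpan K S.x {m | m j ≠ 0} := by
  obtain ⟨w, hw, hδ⟩ := S.exists_skewDelta_adjacentPrime_eq hk.1 hj.1
  rw [hY.smul_defect_mul_defect_eq hk hj hdj hdl hlam hδ]
  exact sub_mem (sub_mem
    (Submodule.smul_mem _ _ (skewDelta_adjacentPrime_mul_gen_mem hk.1 hj.1 hdl))
    (Submodule.smul_mem _ _ (S.gen_mul_mem_monomialSpan (fun t => hdj t) hw)))
    (Submodule.smul_mem _ _ (gen_mul_gen_mul_defect_mem hk.1 hj.1))

theorem lamstar_eq_of_isPred {c y : Fin N → R} (hseq : IsPrimeSeq K S.toQNA η c y)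
    (hk : IsPred η k j) (hj : IsPred η j l) : S.lamstar k = S.lamstar j := by
  have := S.noZeroDivisors
  obtain ⟨hdjk, hdj⟩ := defect_of_isPred hseq hk
  obtain ⟨hdlj, hdl⟩ := defect_of_isPred hseq hj
  obtain ⟨Y, hY⟩ := exists_isPeeled hseq k.2.le
  obtain ⟨Z, hZ⟩ := exists_isPeeled hseq j.2.le
  have hmem := hY.smul_defect_mul_defect_mem hk hj hdj
    (fun t => hZ.defect_eq_zero_of_between hj hdl) (S.lam_mul_lamstar_of_defect hk.1 hdj hdjk)
  have hzero := eq_zero_of_mem_monomialSpan_disjoint S.pbw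
    (Set.disjoint_left.2 fun m (hm : m j ≠ 0) => hm) hmem
    (Submodule.smul_mem _ _ (defect_mul_defect_mem hk.1 hj.1))
  have hscalar := (smul_eq_zero_iff_left (mul_ne_zero hdjk hdlj)).1 hzero
  have hχ : S.eigval (S.h j) k * S.eigval (S.h l) j * S.eigval (S.h l) k ≠ 0 :=
    mul_ne_zero (mul_ne_zero (S.eigval_ne_zero _ _) (S.eigval_ne_zero _ _)) (S.eigval_ne_zero _ _)
  rw [mul_eq_zero_iff_left hχ, sub_eq_zero, eq_comm,
    mul_inv_eq_one₀ (S.one_sub_lamstar_ne_zero k)] at hscalar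
  linear_combination hscalar

theorem lamstar_eq_inv_lam_of_lt {c y : Fin N → R} (hseq : IsPrimeSeq K S.toQNA η c y)
    (hkl : k < l) (hη : η k = η l) : S.lamstar k = (S.lam l)⁻¹ := by
  induction k using WellFoundedGT.induction with
  | ind k ih =>
    obtain ⟨j, hjl, hk⟩ := exists_isPred_of_lt hkl hη
    rcases hjl.eq_or_lt with rfl | hjl
    · obtain ⟨hd, h⟩ := defect_of_isPred hseq hk
      exact eq_inv_of_mul_eq_one_right (S.lam_mul_lamstar_of_defect hk.1 h hd)
    · have hηj : η j = η l := hk.2.1.symm.trans hη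
      obtain ⟨l', -, hj⟩ := exists_isPred_of_lt hjl hηj
      exact (lamstar_eq_of_isPred hseq hk hj).trans (ih j hk.1 hjl hηj)

theorem lamstar_eq_of_lt {c y : Fin N → R} (hseq : IsPrimeSeq K S.toQNA η c y)
    (hkl : k < l) (hη : η k = η l) (hl : ∃ l', l < l' ∧ η l' = η l) :
    S.lamstar k = S.lamstar l := by
  obtain ⟨l', hll', hη'⟩ := hl
  rw [lamstar_eq_inv_lam_of_lt hseq (hkl.trans hll') (hη.trans hη'.symm),
    lamstar_eq_inv_lam_of_lt hseq hll' hη'.symm]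

end SymQNA

/-- **Proposition (eigenvalues of symmetric quantum nilpotent algebras).**
Let `R` be a symmetric quantum nilpotent algebra of dimension `N` with function `η`
from the prime element theorem, and let `λ*_k` be the `h*_k`-eigenvalue of `x_k`.
Then `λ*_k = λ*_l` whenever `η k = η l`, `s(k) ≠ +∞` and `s(l) ≠ +∞`, and
`λ*_k = λ_l⁻¹` whenever `η k = η l`, `s(k) ≠ +∞` and `p(l) ≠ −∞`. -/
theorem lamstar_eq_of_symQNA
    {K : Type u} [Field K] {R : Type v} [Ring R] [Algebra K R] {N r : ℕ}
    (S : SymQNA K R N r)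
    (η : Fin N → ℤ) (c y : Fin N → R) (hseq : IsPrimeSeq K S.toQNA η c y) :
    (∀ k l : Fin N, η k = η l →
      (∃ k' : Fin N, k < k' ∧ η k' = η k) → (∃ l' : Fin N, l < l' ∧ η l' = η l) →
      S.lamstar k = S.lamstar l) ∧
    (∀ k l : Fin N, η k = η l →
      (∃ k' : Fin N, k < k' ∧ η k' = η k) → (∃ l' : Fin N, l' < l ∧ η l' = η l) →
      S.lamstar k = (S.lam l)⁻¹) := by
  refine ⟨fun k l hη hk hl => ?_, fun k l hη hk ⟨l', hl', hη'⟩ => ?_⟩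
  · rcases lt_trichotomy k l with hkl | rfl | hlk
    · exact SymQNA.lamstar_eq_of_lt hseq hkl hη hl
    · rfl
    · exact (SymQNA.lamstar_eq_of_lt hseq hlk hη.symm hk).symm
  · rcases lt_or_ge k l with hkl | hlk
    · exact SymQNA.lamstar_eq_inv_lam_of_lt hseq hkl hη
    · rw [← SymQNA.lamstar_eq_of_lt hseq (hl'.trans_le hlk) (hη'.trans hη.symm) hk,
        SymQNA.lamstar_eq_inv_lam_of_lt hseq hl' hη']
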